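/- arXiv:1903.11497 — 2 statements merged into one kernel-verified Lean document; each statement's English description precedes it below -/
import Mathlib

section
/- Let F be a finite field with q elements, ψ : F → ℂˣ a nontrivial additive character, and n > m ≥ 1 integers. Let (π, V) be an irreducible cuspidal representation of GL_n(F) and (τ, W) an irreducible generic representation of GL_m(F). Then there exists a complex number γ such that for every integer k with 0 ≤ k ≤ n−m−1, every ψ_n-Whittaker functional λ on π, every v ∈ V, every ψ_m^{-1}-Whittaker functional μ on τ, and every w ∈ W, writing W_π(g) = λ(π(g)v) and W_τ(h) = μ(τ(h)w), one has γ · q^{km} · |U_m(F)|^{-1} Σ_{g ∈ GL_m(F)} Σ_{x ∈ M_{(n−m−1−k)×m}(F)} W_π(A(g,x)) W_τ(g) = |U_m(F)|^{-1} Σ_{g ∈ GL_m(F)} Σ_{y ∈ M_{m×k}(F)} W_π(B(g,y)) W_τ(g), where A(g,x) is the n×n block matrix with diagonal blocks g, I_{n−m−1−k}, I_{k+1}, with x in the block position below g (rows m+1,…,n−k−1, columns 1,…,m) and all other off-diagonal blocks zero, and B(g,y) is the n×n block matrix with block rows of heights (n−m−k, k, m) and block columns of widths (m, n−m−k, k)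 given by rows [0, I_{n−m−k}, 0], [0, 0, I_k], [g, 0, y]. -/
/-!
Statement 0: existence of the Rankin–Selberg gamma factor over a finite field
(Roditty; Nien, Theorem 2.10): for an irreducible cuspidal representation π of
GL_n(F) and an irreducible generic representation τ of GL_m(F), n > m, there is
a complex number γ satisfying the functional equation.
-/

open Matrix BigOperators

namespace Stmt0

variable (F : Type*) [Field F] [Fintype F] [DecidableEq F]

noncomputable instance {n : ℕ} : Fintype (GL (Fin n) F) :=
  inferInstanceAs (Fintype (Matrix (Fin n) (Fin n) F)ˣ)

/-- A matrix is upper triangular unipotent. -/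
def IsUnip {n : ℕ} (u : Matrix (Fin n) (Fin n) F) : Prop :=
  (∀ i, u i i = 1) ∧ ∀ i j : Fin n, (j : ℕ) < (i : ℕ) → u i j = 0

open scoped Classical in
/-- The subgroup `U_n(F)` of upper triangular unipotent matrices, as a finset of `GL n F`. -/
noncomputable def UnipFinset (n : ℕ) : Finset (GL (Fin n) F) :=
  Finset.univ.filter fun u => IsUnip F (u : Matrix (Fin n) (Fin n) F)

/-- The sum of the superdiagonal entries of a matrix. -/
def superdiag {n : ℕ} (u : Matrix (Fin n) (Fin n) F) : F :=
  ∑ i : Fin n, ∑ j : Fin n, if (j : ℕ) = (i : ℕ) + 1 then u i j else 0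

variable {F}

/-- The character `ψ_n` of `U_n(F)`:  `ψ_n(u) = ψ(u_{1,2} + ⋯ + u_{n-1,n})`,
as a complex-valued function on `GL n F`. -/
noncomputable def psiN (ψ : AddChar F ℂˣ) {n : ℕ} (u : GL (Fin n) F) : ℂ :=
  (ψ (superdiag F (u : Matrix (Fin n) (Fin n) F)) : ℂˣ)

/-- Promote a matrix to an element of `GL n F` (junk value `1` if not invertible). -/
noncomputable def toGL {n : ℕ} (M : Matrix (Fin n) (Fin n) F) : GL (Fin n) F :=
  if h : M.det ≠ 0 then Matrix.GeneralLinearGroup.mkOfDetNeZero M h else 1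

/-- `lam` is a `χ`-Whittaker functional for `π`. -/
def IsWhittaker {n : ℕ} {V : Type*} [AddCommGroup V] [Module ℂ V]
    (π : Representation ℂ (GL (Fin n) F) V) (χ : GL (Fin n) F → ℂ)
    (lam : V →ₗ[ℂ] ℂ) : Prop :=
  ∀ u : GL (Fin n) F, IsUnip F (u : Matrix (Fin n) (Fin n) F) →
    ∀ v : V, lam (π u v) = χ u * lam v

/-- `π` is irreducible: the only invariant subspaces are `⊥` and `⊤`. -/
def IsIrreducible {n : ℕ} {V : Type*} [AddCommGroup V] [Module ℂ V]
    (π : Representation ℂ (GL (Fin n) F) V) : Prop :=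
  ∀ W : Submodule ℂ V, (∀ g v, v ∈ W → π g v ∈ W) → W = ⊥ ∨ W = ⊤

/-- `π` is cuspidal : for each decomposition `n = n₁ + n₂` with `n₁, n₂ ≥ 1`, the sum of the
`π([[1,x],[0,1]])` over `x ∈ M_{n₁×n₂}(F)` vanishes. -/
def IsCuspidal {n : ℕ} {V : Type*} [AddCommGroup V] [Module ℂ V]
    (π : Representation ℂ (GL (Fin n) F) V) : Prop :=
  ∀ n₁ n₂ : ℕ, 1 ≤ n₁ → 1 ≤ n₂ → ∀ h : n₁ + n₂ = n,
    ∑ x : Matrix (Fin n₁) (Fin n₂) F,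
      π (toGL (Matrix.reindex (finSumFinEquiv.trans (finCongr h))
          (finSumFinEquiv.trans (finCongr h)) (Matrix.fromBlocks 1 x 0 1))) = 0

/-- The block matrix `A(g,x)` with diagonal blocks `g, I_{n-m-1-k}, I_{k+1}` and `x` in the
block position below `g`, all other off-diagonal blocks being zero. -/
def Amat {n m k : ℕ} (hm : m < n) (hk : k ≤ n - m - 1)
    (g : Matrix (Fin m) (Fin m) F) (x : Matrix (Fin (n - m - 1 - k)) (Fin m) F) :
    Matrix (Fin n) (Fin n) F := fun i j =>
  if hi : (i : ℕ) < m then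
    if hj : (j : ℕ) < m then g ⟨i, hi⟩ ⟨j, hj⟩ else 0
  else
    if hj : (j : ℕ) < m then
      if hik : (i : ℕ) < n - k - 1 then
        x ⟨(i : ℕ) - m, by omega⟩ ⟨j, hj⟩
      else 0
    else if (i : ℕ) = (j : ℕ) then 1 else 0

/-- The block matrix `B(g,y)` with block rows of heights `(n-m-k, k, m)` and block columns of
widths `(m, n-m-k, k)` given by rows `[0, I, 0]`, `[0, 0, I]`, `[g, 0, y]`. -/
def Bmat {n m k : ℕ} (hm : m < n) (hk : k ≤ n - m - 1)
    (g : Matrix (Fin m) (Fin m) F) (y : Matrix (Fin m) (Fin k) F) :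
    Matrix (Fin n) (Fin n) F := fun i j =>
  if hi : (i : ℕ) < n - m then
    if (j : ℕ) = (i : ℕ) + m then 1 else 0
  else
    if hj : (j : ℕ) < m then g ⟨(i : ℕ) - (n - m), by omega⟩ ⟨j, hj⟩
    else if hj2 : n - k ≤ (j : ℕ) then
      y ⟨(i : ℕ) - (n - m), by omega⟩ ⟨(j : ℕ) - (n - k), by omega⟩
    else 0

/-!
The space of Whittaker functionals of an irreducible representation is at most one-dimensional
(Gelfand and Graev): by the Bruhat decomposition, transposition along the antidiagonal fixes every
Whittaker-relevant double coset, so the associated Hecke operators commute on an irreducible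
representation and have rank at most one.

Both sides of the functional equation are invariant pairings
`∑ g, l (π (diag (g, 1)) v) * mu (τ g w)`, the right-hand one with `l v = ∑ y, lam (π (B(1, y)) v)`.
For `k = n - m - 1` this `l` is equivariant under the unipotent matrices whose first `m + 1` columns
are those of the identity. Expand such a functional in Fourier series one column at a time:
cuspidality kills the constant terms, so `l` is a linear combination of `GL_m`-translates of
Whittaker functionals. Uniqueness on the `π` side turns the pairing into one of `lam` with some
functional on `τ`, and uniqueness on the `τ` side makes that a scalar multiple of `mu`, the scalar
depending only on `π`, `τ` and `ψ`. For smaller `k`, apply this identity to the translates of `v`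
by the elements `A(1, x)`: summing over `x` leaves only the `y` supported on the last `k` columns.
-/

section Unipotent

variable {K : Type*} [Field K] {n : ℕ}

lemma toGL_coe [DecidableEq K] (g : GL (Fin n) K) :
    toGL (g : Matrix (Fin n) (Fin n) K) = g := by
  have hdet : (g : Matrix (Fin n) (Fin n) K).det ≠ 0 :=
    ((Matrix.isUnit_iff_isUnit_det _).1 g.isUnit).ne_zero
  rw [toGL, dif_pos hdet]
  exact Units.ext rfl

lemma toGL_eq_of_val_eq [DecidableEq K] {M : Matrix (Fin n) (Fin n) K} {g : GL (Fin n) K}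
    (h : (g : Matrix (Fin n) (Fin n) K) = M) : toGL M = g := by
  rw [← h, toGL_coe]

/-- Strictly upper triangular matrices; the unipotent matrices are the `1 + D` with `D` strictly
upper triangular. -/
def IsStrictUpper (D : Matrix (Fin n) (Fin n) K) : Prop :=
  ∀ i j : Fin n, (j : ℕ) ≤ i → D i j = 0

lemma IsStrictUpper.isUnip_one_add {D : Matrix (Fin n) (Fin n) K} (hD : IsStrictUpper D) :
    IsUnip K (1 + D) := by
  refine ⟨fun i => by simp [hD i i le_rfl], fun i j hji => ?_⟩
  have hne : i ≠ j := by rintro rfl; exact lt_irrefl _ hji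
  simp [hD i j hji.le, Matrix.one_apply_ne hne]

lemma IsUnip.isStrictUpper_sub_one {u : Matrix (Fin n) (Fin n) K} (hu : IsUnip K u) :
    IsStrictUpper (u - 1) := by
  intro i j hji
  rcases hji.lt_or_eq with hlt | heq
  · have hne : i ≠ j := by rintro rfl; exact lt_irrefl _ hlt
    simp [hu.2 i j hlt, Matrix.one_apply_ne hne]
  · obtain rfl : j = i := Fin.ext heq
    simp [hu.1 j]

lemma IsStrictUpper.add {D E : Matrix (Fin n) (Fin n) K} (hD : IsStrictUpper D)
    (hE : IsStrictUpper E) : IsStrictUpper (D + E) := fun i j hji => by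
  simp [hD i j hji, hE i j hji]

lemma IsStrictUpper.mul_apply_eq_zero {D E : Matrix (Fin n) (Fin n) K} (hD : IsStrictUpper D)
    (hE : IsStrictUpper E) {i j : Fin n} (hji : (j : ℕ) ≤ i + 1) : (D * E) i j = 0 := by
  rw [Matrix.mul_apply]
  refine Finset.sum_eq_zero fun l _ => ?_
  rcases le_or_gt (l : ℕ) i with hl | hl
  · rw [hD i l hl, zero_mul]
  · rw [hE l j (by omega), mul_zero]

lemma superdiag_congr {M N : Matrix (Fin n) (Fin n) K}
    (h : ∀ i j : Fin n, (j : ℕ) = i + 1 → M i j = N i j) : superdiag K M = superdiag K N := by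
  unfold superdiag
  refine Finset.sum_congr rfl fun i _ => Finset.sum_congr rfl fun j _ => ?_
  split_ifs with hij
  · exact h i j hij
  · rfl

lemma superdiag_add (M N : Matrix (Fin n) (Fin n) K) :
    superdiag K (M + N) = superdiag K M + superdiag K N := by
  simp only [superdiag, ← Finset.sum_add_distrib]
  refine Finset.sum_congr rfl fun i _ => Finset.sum_congr rfl fun j _ => ?_
  split_ifs <;> simp

lemma superdiag_zero : superdiag K (0 : Matrix (Fin n) (Fin n) K) = 0 := by
  simp [superdiag]

lemma superdiag_one_add (D : Matrix (Fin n) (Fin n) K) :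
    superdiag K (1 + D) = superdiag K D :=
  superdiag_congr fun i j hij => by
    have hne : i ≠ j := by rintro rfl; omega
    rw [Matrix.add_apply, Matrix.one_apply_ne hne, zero_add]

lemma superdiag_one : superdiag K (1 : Matrix (Fin n) (Fin n) K) = 0 := by
  simpa [superdiag_zero] using superdiag_one_add (0 : Matrix (Fin n) (Fin n) K)

lemma superdiag_eq_single {M : Matrix (Fin n) (Fin n) K} {a b : Fin n} (hab : (b : ℕ) = a + 1)
    (h : ∀ i j : Fin n, (j : ℕ) = i + 1 → i ≠ a → M i j = 0) : superdiag K M = M a b := by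
  unfold superdiag
  rw [Finset.sum_eq_single a _ (by simp), Finset.sum_eq_single b _ (by simp), if_pos hab]
  · exact fun j _ hj => if_neg fun hja => hj (Fin.ext (hja.trans hab.symm))
  · refine fun i _ hi => Finset.sum_eq_zero fun j _ => ?_
    split_ifs with hij
    · exact h i j hij hi
    · rfl

lemma isUnip_one : IsUnip K (1 : Matrix (Fin n) (Fin n) K) :=
  ⟨fun i => Matrix.one_apply_eq i, fun i j h => Matrix.one_apply_ne (by rintro rfl; omega)⟩

lemma IsUnip.mul {u v : Matrix (Fin n) (Fin n) K} (hu : IsUnip K u) (hv : IsUnip K v) :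
    IsUnip K (u * v) := by
  have hsplit : u * v = 1 + ((u - 1) + (v - 1) + (u - 1) * (v - 1)) := by noncomm_ring
  rw [hsplit]
  have hmul : IsStrictUpper ((u - 1) * (v - 1)) := fun i j hji =>
    hu.isStrictUpper_sub_one.mul_apply_eq_zero hv.isStrictUpper_sub_one (by omega)
  exact ((hu.isStrictUpper_sub_one.add hv.isStrictUpper_sub_one).add hmul).isUnip_one_add

lemma IsUnip.superdiag_mul {u v : Matrix (Fin n) (Fin n) K} (hu : IsUnip K u)
    (hv : IsUnip K v) : superdiag K (u * v) = superdiag K u + superdiag K v := by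
  have hsplit : u * v + 1 = u + v + (u - 1) * (v - 1) := by noncomm_ring
  rw [← superdiag_add, ← superdiag_one_add (u * v), add_comm 1, hsplit]
  refine superdiag_congr fun i j hij => ?_
  rw [Matrix.add_apply, hu.isStrictUpper_sub_one.mul_apply_eq_zero hv.isStrictUpper_sub_one hij.le,
    add_zero]

lemma IsUnip.isUpperTriangular {u : Matrix (Fin n) (Fin n) K} (hu : IsUnip K u) :
    u.IsUpperTriangular := fun i j hij => hu.2 i j hij

lemma IsUnip.det {u : Matrix (Fin n) (Fin n) K} (hu : IsUnip K u) : u.det = 1 := by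
  rw [Matrix.det_of_isUpperTriangular hu.isUpperTriangular]
  exact Finset.prod_eq_one fun i _ => hu.1 i

lemma IsUnip.inv {u : Matrix (Fin n) (Fin n) K} (hu : IsUnip K u) : IsUnip K u⁻¹ := by
  have hdet : IsUnit u.det := hu.det ▸ isUnit_one
  have := Matrix.invertibleOfIsUnitDet u hdet
  have hinv : u⁻¹.IsUpperTriangular :=
    Matrix.blockTriangular_inv_of_blockTriangular hu.isUpperTriangular
  refine ⟨fun i => ?_, fun i j hji => hinv hji⟩
  have hdiag : (u⁻¹ * u) i i = u⁻¹ i i * u i i := by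
    refine Finset.sum_eq_single i (fun l _ hl => ?_) fun hi => absurd (Finset.mem_univ i) hi
    rcases lt_or_gt_of_ne hl with hlt | hgt
    · exact mul_eq_zero_of_left (hinv hlt) _
    · exact mul_eq_zero_of_right _ (hu.2 l i hgt)
  rwa [Matrix.nonsing_inv_mul u hdet, Matrix.one_apply_eq, hu.1 i, mul_one, eq_comm] at hdiag

variable (K n) in
/-- The group `U_n(K)` of upper triangular unipotent matrices. -/
def unipotentSubgroup : Subgroup (GL (Fin n) K) where
  carrier := {u | IsUnip K (u : Matrix (Fin n) (Fin n) K)}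
  mul_mem' hu hv := by
    rw [Set.mem_ofPred_eq, Units.val_mul]
    exact IsUnip.mul hu hv
  one_mem' := isUnip_one
  inv_mem' {u} hu := by
    rw [Set.mem_ofPred_eq, Matrix.coe_units_inv]
    exact IsUnip.inv hu

lemma psiN_one (ψ : AddChar K ℂˣ) : psiN ψ (1 : GL (Fin n) K) = 1 := by
  simp [psiN, superdiag_one]

lemma psiN_mul (ψ : AddChar K ℂˣ) {u u' : GL (Fin n) K} (hu : u ∈ unipotentSubgroup K n)
    (hu' : u' ∈ unipotentSubgroup K n) : psiN ψ (u * u') = psiN ψ u * psiN ψ u' := by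
  simp only [psiN, Units.val_mul, IsUnip.superdiag_mul hu hu', AddChar.map_add_eq_mul]

/-- The character `ψ_n`, as a homomorphism on `U_n(K)`. -/
noncomputable def whittakerChar (ψ : AddChar K ℂˣ) : unipotentSubgroup K n →* ℂ where
  toFun u := psiN ψ (u : GL (Fin n) K)
  map_one' := psiN_one ψ
  map_mul' u v := psiN_mul ψ u.2 v.2

lemma psiN_inv_addChar (ψ : AddChar K ℂˣ) (u : GL (Fin n) K) :
    psiN ψ⁻¹ u = (psiN ψ u)⁻¹ := by
  rw [psiN, psiN, AddChar.inv_apply, AddChar.map_neg_eq_inv, Units.val_inv_eq_inv_val]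

end Unipotent

section Involution

variable {n : ℕ} {α : Type*}

lemma exists_gt_apply_le [LinearOrder α] [Finite α] (ρ : Equiv.Perm α) {i : α} (hi : i < ρ i) :
    ∃ j, i < j ∧ ρ j ≤ i := by
  by_contra! hcon
  have hmaps : Set.MapsTo ρ (Set.Ici i) (Set.Ioi i) := fun j hj =>
    (Set.mem_Ici.1 hj).eq_or_lt.elim (fun h => h ▸ hi) (hcon j)
  have hbij : Set.BijOn ρ (Set.Ici i) (Set.Ici i) :=
    ((Set.toFinite _).injOn_iff_bijOn_of_mapsTo (hmaps.mono_right Set.Ioi_subset_Ici_self)).1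
      ρ.injective.injOn
  obtain ⟨j, hj, hji⟩ := hbij.surjOn Set.self_mem_Ici
  exact lt_irrefl i (hji ▸ hmaps hj)

lemma exists_lt_le_apply [LinearOrder α] [Finite α] (ρ : Equiv.Perm α) {i : α} (hi : ρ i < i) :
    ∃ j, j < i ∧ i ≤ ρ j :=
  exists_gt_apply_le (α := αᵒᵈ) ρ hi

/-- Every descent of `ρ` is a drop by exactly one, along which `t` does not change. Such a `ρ`
reverses each of a sequence of consecutive intervals. -/
def IsLayered (ρ : Equiv.Perm (Fin n)) (t : Fin n → α) : Prop :=
  ∀ i j : Fin n, (j : ℕ) = i + 1 → ρ i < ρ j ∨ (ρ i : ℕ) = ρ j + 1 ∧ t i = t j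

variable {ρ : Equiv.Perm (Fin n)} {t : Fin n → α}

lemma IsLayered.of_inversion (hρ : IsLayered ρ t) {i j : Fin n} (hij : i < j) (hinv : ρ j < ρ i) :
    (ρ i : ℕ) + i = ρ j + j ∧ t i = t j := by
  induction hd : (j : ℕ) - i using Nat.strong_induction_on generalizing i j with
  | _ d ih =>
    have hne : ∀ {a b : Fin n}, a ≠ b → (ρ a : ℕ) ≠ ρ b := fun h h' =>
      h (ρ.injective (Fin.ext h'))
    obtain ⟨i', hi'⟩ : ∃ i' : Fin n, (i' : ℕ) = i + 1 := ⟨⟨i + 1, by omega⟩, rfl⟩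
    obtain ⟨j', hj'⟩ : ∃ j' : Fin n, (j : ℕ) = j' + 1 := ⟨⟨j - 1, by omega⟩, by simp; omega⟩
    by_cases hadj : i' = j
    · subst hadj
      rcases hρ i i' hi' with h | ⟨h, ht⟩
      · exact absurd h hinv.asymm
      · exact ⟨by omega, ht⟩
    have h1 := hne (show i ≠ j' by rintro rfl; omega)
    have h2 := hne hadj
    rcases hρ j' j hj' with hup | ⟨hdown, ht⟩
    · rcases hρ i i' hi' with hup' | ⟨hdown', ht'⟩
      · have hi'j' : i' ≠ j' := by
          rintro rfl
          exact lt_irrefl _ (hup'.trans (hup.trans hinv))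
        have hj := (ih _ (by omega) (i := i') (j := j) (by omega) (by omega) rfl).1
        have hj' := (ih _ (by omega) (i := i') (j := j') (by omega) (by omega) rfl).1
        omega
      · have hj := ih _ (by omega) (i := i') (j := j) (by omega) (by omega) rfl
        exact ⟨by omega, ht'.trans hj.2⟩
    · have hj := ih _ (by omega) (i := i) (j := j') (by omega) (by omega) rfl
      exact ⟨by omega, hj.2.trans ht⟩

lemma IsLayered.apply_apply (hρ : IsLayered ρ t) (i : Fin n) : ρ (ρ i) = i ∧ t (ρ i) = t i := by
  have hne : ρ i ≠ i → ρ (ρ i) ≠ ρ i := fun h => ρ.injective.ne h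
  rcases lt_trichotomy (ρ i) i with hlt | heq | hgt
  · obtain ⟨j, hji, hij⟩ := exists_lt_le_apply ρ hlt
    have hj := (hρ.of_inversion hji (hlt.trans_le hij)).1
    rcases lt_or_gt_of_ne (hne hlt.ne) with h | h
    · have hjk : j ≠ ρ i := by rintro rfl; omega
      have := (hρ.of_inversion (i := j) (j := ρ i) (by omega) (by omega)).1
      omega
    · have hk := hρ.of_inversion hlt h
      exact ⟨Fin.ext (by omega), hk.2⟩
  · rw [heq, heq]
    exact ⟨rfl, rfl⟩
  · obtain ⟨j, hij, hji⟩ := exists_gt_apply_le ρ hgt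
    have hj := (hρ.of_inversion hij (hji.trans_lt hgt)).1
    rcases lt_or_gt_of_ne (hne hgt.ne') with h | h
    · have hk := hρ.of_inversion hgt h
      exact ⟨Fin.ext (by omega), hk.2.symm⟩
    · have hjk : j ≠ ρ i := by rintro rfl; omega
      have := (hρ.of_inversion (i := ρ i) (j := j) (by omega) (by omega)).1
      omega

end Involution

section Bruhat

variable {K : Type*} [Field K] {n : ℕ}

lemma GL_row_ne_zero (g : GL (Fin n) K) (i : Fin n) : ∃ j, g i j ≠ 0 := by
  by_contra! hrow
  exact ((Matrix.isUnit_iff_isUnit_det _).1 g.isUnit).ne_zero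
    (Matrix.det_eq_zero_of_row_eq_zero i hrow)

lemma IsUnip.exists_val_eq {u : Matrix (Fin n) (Fin n) K} (hu : IsUnip K u) :
    ∃ u' ∈ unipotentSubgroup K n, (u' : Matrix (Fin n) (Fin n) K) = u := by
  have hunit : IsUnit u := (Matrix.isUnit_iff_isUnit_det u).2 (hu.det ▸ isUnit_one)
  exact ⟨hunit.unit, hu, rfl⟩

lemma isUnip_one_add_vecMulVec {a b : Fin n → K}
    (h : ∀ i j : Fin n, (j : ℕ) ≤ i → a i = 0 ∨ b j = 0) : IsUnip K (1 + vecMulVec a b) :=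
  IsStrictUpper.isUnip_one_add fun i j hji => by
    rw [vecMulVec_apply, mul_eq_zero]
    exact h i j hji

/-- The entry `(i, j)` of `M` is a pivot if all other entries of its row and of its column
vanish. -/
def IsPivot (M : Matrix (Fin n) (Fin n) K) (i j : Fin n) : Prop :=
  (∀ l, l ≠ j → M i l = 0) ∧ ∀ k, k ≠ i → M k j = 0

lemma exists_unip_clear_row (M : Matrix (Fin n) (Fin n) K) {s : Fin n} (hs : ∃ j, M s j ≠ 0) :
    ∃ u, IsUnip K u ∧ ∃ j, M s j ≠ 0 ∧ (∀ l, l ≠ j → (M * u) s l = 0) ∧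
      (∀ k, (M * u) k j = M k j) ∧ ∀ i p, i ≠ s → IsPivot M i p → IsPivot (M * u) i p := by
  obtain ⟨j, hj, hmin⟩ := WellFounded.has_min (wellFounded_lt (α := Fin n)) {j | M s j ≠ 0} hs
  replace hmin : ∀ l, l < j → M s l = 0 := fun l hl => by_contra fun h => hmin l h hl
  replace hj : M s j ≠ 0 := hj
  let b : Fin n → K := fun l => if j < l then -(M s l / M s j) else 0
  have hb : ∀ l, l ≤ j → b l = 0 := fun l hl => if_neg hl.not_gt
  have hentry : ∀ k l, (M * (1 + vecMulVec (Pi.single j 1) b)) k l = M k l + M k j * b l := by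
    intro k l
    rw [Matrix.mul_add, Matrix.mul_one, mul_vecMulVec, Matrix.add_apply, vecMulVec_apply,
      mulVec_single_one, Matrix.col_apply]
  refine ⟨1 + vecMulVec (Pi.single j 1) b, isUnip_one_add_vecMulVec fun i l hli => ?_, j, hj,
    fun l hl => ?_, fun k => by rw [hentry, hb j le_rfl, mul_zero, add_zero],
    fun i p hi hp => ?_⟩
  · rcases eq_or_ne i j with rfl | hij
    · exact Or.inr (hb l hli)
    · exact Or.inl (Pi.single_eq_of_ne hij 1)
  · rw [hentry]
    rcases lt_or_gt_of_ne hl with h | h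
    · rw [hmin l h, hb l h.le, mul_zero, add_zero]
    · rw [show b l = -(M s l / M s j) from if_pos h]
      field_simp
      ring
  · have hsp : M s p = 0 := hp.2 s hi.symm
    have hij : M i j = 0 := hp.1 j fun h => hj (h ▸ hsp)
    have hbp : b p = 0 := by simp [b, hsp]
    exact ⟨fun l hl => by rw [hentry, hp.1 l hl, hij, zero_mul, add_zero],
      fun k hk => by rw [hentry, hp.2 k hk, hbp, mul_zero, add_zero]⟩

lemma exists_unip_clear_col (M : Matrix (Fin n) (Fin n) K) {s j : Fin n} (hsj : M s j ≠ 0)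
    (hrow : ∀ l, l ≠ j → M s l = 0) (hbelow : ∀ i, s < i → M i j = 0) :
    ∃ u, IsUnip K u ∧ IsPivot (u * M) s j ∧
      ∀ i p, s < i → IsPivot M i p → IsPivot (u * M) i p := by
  let c : Fin n → K := fun i => if i < s then -(M i j / M s j) else 0
  have hc : ∀ i, s ≤ i → c i = 0 := fun i hi => if_neg hi.not_gt
  have hentry : ∀ k l, ((1 + vecMulVec c (Pi.single s 1)) * M) k l = M k l + c k * M s l := by
    intro k l
    rw [Matrix.add_mul, Matrix.one_mul, vecMulVec_mul, Matrix.add_apply, vecMulVec_apply,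
      single_one_vecMul, Matrix.row_apply]
  refine ⟨1 + vecMulVec c (Pi.single s 1), isUnip_one_add_vecMulVec fun i l hli => ?_,
    ⟨fun l hl => ?_, fun k hk => ?_⟩, fun i p hi hp => ⟨fun l hl => ?_, fun k hk => ?_⟩⟩
  · rcases eq_or_ne l s with rfl | hls
    · exact Or.inl (hc i hli)
    · exact Or.inr (Pi.single_eq_of_ne hls 1)
  · rw [hentry, hrow l hl, mul_zero, add_zero]
  · rw [hentry]
    rcases lt_or_gt_of_ne hk with h | h
    · rw [show c k = -(M k j / M s j) from if_pos h]
      field_simp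
      ring
    · rw [hbelow k h, hc k h.le, zero_mul, add_zero]
  · rw [hentry, hp.1 l hl, hc i hi.le, zero_mul, add_zero]
  · rw [hentry, hp.2 k hk, hp.2 s hi.ne, mul_zero, add_zero]

lemma exists_unipotent_isPivot_of_gt (g : GL (Fin n) K) (s : Fin n)
    (hg : ∀ i, s < i → ∃ p, IsPivot (g : Matrix (Fin n) (Fin n) K) i p) :
    ∃ u ∈ unipotentSubgroup K n, ∃ u' ∈ unipotentSubgroup K n,
      ∀ i, s ≤ i → ∃ p, IsPivot ((u * g * u' : GL (Fin n) K) : Matrix (Fin n) (Fin n) K) i p := by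
  obtain ⟨_, hu', j, hsj, hrow, hcol, hpiv'⟩ :=
    exists_unip_clear_row (g : Matrix (Fin n) (Fin n) K) (GL_row_ne_zero g s)
  obtain ⟨u', hu'mem, rfl⟩ := hu'.exists_val_eq
  have hbelow : ∀ i, s < i → ((g : Matrix (Fin n) (Fin n) K) * u') i j = 0 := by
    intro i hi
    obtain ⟨p, hp⟩ := hg i hi
    have hjp : j ≠ p := by
      rintro rfl
      exact hsj (hp.2 s hi.ne)
    rw [hcol, hp.1 j hjp]
  obtain ⟨_, hu, hs, hpiv⟩ := exists_unip_clear_col _ (by rwa [hcol]) hrow hbelow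
  obtain ⟨u, hu_mem, rfl⟩ := hu.exists_val_eq
  refine ⟨u, hu_mem, u', hu'mem, fun i hi => ?_⟩
  rw [Units.val_mul, Units.val_mul, Matrix.mul_assoc]
  rcases hi.eq_or_lt with rfl | hlt
  · exact ⟨j, hs⟩
  · obtain ⟨p, hp⟩ := hg i hlt
    exact ⟨p, hpiv i p hlt (hpiv' i p hlt.ne' hp)⟩

lemma exists_unipotent_isPivot_last_rows (g : GL (Fin n) K) {r : ℕ} (hr : r ≤ n) :
    ∃ u ∈ unipotentSubgroup K n, ∃ u' ∈ unipotentSubgroup K n, ∀ i : Fin n, n ≤ i + r →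
      ∃ p, IsPivot ((u * g * u' : GL (Fin n) K) : Matrix (Fin n) (Fin n) K) i p := by
  induction r with
  | zero => exact ⟨1, one_mem _, 1, one_mem _, fun i hi => by omega⟩
  | succ r ih =>
    obtain ⟨u, hu, u', hu', hpiv⟩ := ih (by omega)
    obtain ⟨v, hv, v', hv', hpiv'⟩ := exists_unipotent_isPivot_of_gt (u * g * u')
      ⟨n - r - 1, by omega⟩ fun i hi => hpiv i (by rw [Fin.lt_def] at hi; simp at hi; omega)
    refine ⟨v * u, mul_mem hv hu, u' * v', mul_mem hu' hv', fun i hi => ?_⟩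
    rw [show v * u * g * (u' * v') = v * (u * g * u') * v' by group]
    exact hpiv' i (by rw [Fin.le_def]; simp; omega)

/-- The matrix whose only nonzero entries are `t i` at `(i, σ i)`. -/
def monomialMatrix (σ : Equiv.Perm (Fin n)) (t : Fin n → K) : Matrix (Fin n) (Fin n) K :=
  Matrix.of fun i j => if j = σ i then t i else 0

lemma exists_eq_monomialMatrix (g : GL (Fin n) K)
    (hg : ∀ i, ∃ j, IsPivot (g : Matrix (Fin n) (Fin n) K) i j) :
    ∃ (σ : Equiv.Perm (Fin n)) (t : Fin n → K), (∀ i, t i ≠ 0) ∧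
      (g : Matrix (Fin n) (Fin n) K) = monomialMatrix σ t := by
  choose σ hσ using hg
  have hne : ∀ i, g i (σ i) ≠ 0 := by
    intro i
    obtain ⟨j, hj⟩ := GL_row_ne_zero g i
    obtain rfl : j = σ i := by_contra fun h => hj ((hσ i).1 j h)
    exact hj
  have hinj : Function.Injective σ := fun i i' h =>
    by_contra fun hii' => hne i (h ▸ (hσ i').2 i hii')
  refine ⟨Equiv.ofBijective σ (Finite.injective_iff_bijective.1 hinj), fun i => g i (σ i), hne, ?_⟩
  ext i j
  rw [monomialMatrix, Matrix.of_apply, Equiv.ofBijective_apply]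
  split_ifs with h
  · rw [h]
  · exact (hσ i).1 j h

lemma exists_unipotent_mul_mul_eq_monomialMatrix (g : GL (Fin n) K) :
    ∃ u ∈ unipotentSubgroup K n, ∃ u' ∈ unipotentSubgroup K n,
      ∃ (σ : Equiv.Perm (Fin n)) (t : Fin n → K), (∀ i, t i ≠ 0) ∧
        ((u * g * u' : GL (Fin n) K) : Matrix (Fin n) (Fin n) K) = monomialMatrix σ t := by
  obtain ⟨u, hu, u', hu', hpiv⟩ := exists_unipotent_isPivot_last_rows g le_rfl
  exact ⟨u, hu, u', hu', exists_eq_monomialMatrix _ fun i => hpiv i (by omega)⟩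

end Bruhat

section MultiplicityOne

variable {G : Type*} [Group G] {H : Subgroup G} {V : Type*} [AddCommGroup V] [Module ℂ V]

lemma eq_top_of_orbit_mem {π : Representation ℂ G V}
    (hirr : ∀ W : Submodule ℂ V, (∀ g v, v ∈ W → π g v ∈ W) → W = ⊥ ∨ W = ⊤) {x : V} (hx : x ≠ 0)
    {W : Submodule ℂ V} (hW : ∀ g, π g x ∈ W) : W = ⊤ := by
  have hspan : Submodule.span ℂ (Set.range fun g => π g x) = ⊤ := by
    refine (hirr _ fun g v hv => ?_).resolve_left fun hbot => hx ?_
    · induction hv using Submodule.span_induction with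
      | mem y hy =>
        obtain ⟨g', rfl⟩ := hy
        exact Submodule.subset_span ⟨g * g', by simp only [map_mul, Module.End.mul_apply]⟩
      | zero => rw [map_zero]; exact zero_mem _
      | add y z _ _ hy hz => rw [map_add]; exact add_mem hy hz
      | smul c y _ hy => rw [map_smul]; exact Submodule.smul_mem _ c hy
    · exact (Submodule.span_eq_bot.1 hbot) x ⟨1, by simp only [map_one, Module.End.one_apply]⟩
  rw [eq_top_iff, ← hspan, Submodule.span_le]
  rintro _ ⟨g, rfl⟩
  exact hW g

/-- `l` is an `(H, χ)`-equivariant functional on `π`; Whittaker functionals are the case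
`H = U_n`. -/
def IsEquivariant (π : Representation ℂ G V) (χ : H →* ℂ) (l : V →ₗ[ℂ] ℂ) : Prop :=
  ∀ (h : H) (v : V), l (π h v) = χ h * l v

lemma map_inv_mul_map (χ : H →* ℂ) (h : H) : χ h⁻¹ * χ h = 1 := by
  rw [← map_mul, inv_mul_cancel, map_one]

/-- The projection of `π` onto its `(H, χ)`-isotypic vectors. -/
noncomputable def charProj [Fintype H] (π : Representation ℂ G V) (χ : H →* ℂ) :
    Module.End ℂ V :=
  (Fintype.card H : ℂ)⁻¹ • ∑ h : H, χ h⁻¹ • π h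

section CharProj

variable [Fintype H] (π : Representation ℂ G V) (χ : H →* ℂ)

lemma charProj_apply (v : V) :
    charProj π χ v = (Fintype.card H : ℂ)⁻¹ • ∑ h : H, χ h⁻¹ • π h v := by
  simp [charProj]

lemma inv_card_smul_sum_const {M : Type*} [AddCommGroup M] [Module ℂ M] (x : M) :
    (Fintype.card H : ℂ)⁻¹ • ∑ _ : H, x = x := by
  have hcard : (Fintype.card H : ℂ) ≠ 0 := Nat.cast_ne_zero.2 Fintype.card_ne_zero
  rw [Finset.sum_const, Finset.card_univ, ← Nat.cast_smul_eq_nsmul ℂ, inv_smul_smul₀ hcard]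

lemma charProj_map (h : H) (v : V) : charProj π χ (π h v) = χ h • charProj π χ v := by
  simp only [charProj_apply, Finset.smul_sum]
  rw [← Equiv.sum_comp (Equiv.mulRight h⁻¹)]
  refine Finset.sum_congr rfl fun k _ => ?_
  rw [Equiv.coe_mulRight, ← Module.End.mul_apply, ← map_mul, smul_comm (χ h), smul_smul (χ h),
    ← map_mul]
  simp

lemma map_charProj (h : H) (v : V) : π h (charProj π χ v) = χ h • charProj π χ v := by
  simp only [charProj_apply, map_smul, map_sum, Finset.smul_sum]
  rw [← Equiv.sum_comp (Equiv.mulLeft h) fun k => χ h • _]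
  refine Finset.sum_congr rfl fun k _ => ?_
  rw [Equiv.coe_mulLeft, ← Module.End.mul_apply, ← map_mul, smul_comm (χ h), smul_smul (χ h),
    mul_comm (χ h), ← map_mul, ← Subgroup.coe_mul]
  simp

lemma charProj_charProj (v : V) : charProj π χ (charProj π χ v) = charProj π χ v := by
  rw [charProj_apply]
  simp only [map_charProj, smul_smul, map_inv_mul_map, one_smul]
  exact inv_card_smul_sum_const _

variable {π χ}

lemma IsEquivariant.apply_charProj {l : V →ₗ[ℂ] ℂ} (hl : IsEquivariant π χ l) (v : V) :
    l (charProj π χ v) = l v := by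
  rw [charProj_apply, map_smul, map_sum]
  simp only [map_smul, hl _ v, smul_eq_mul, ← mul_assoc, map_inv_mul_map, one_mul]
  exact inv_card_smul_sum_const _

lemma isEquivariant_comp_charProj (l : V →ₗ[ℂ] ℂ) : IsEquivariant π χ (l ∘ₗ charProj π χ) :=
  fun h v => by
    rw [LinearMap.comp_apply, charProj_map, map_smul, smul_eq_mul, LinearMap.comp_apply]

end CharProj

/-- Gelfand's criterion for `(H, χ)`: an anti-involution `ι` fixing `(H, χ)` and every double coset
`H g H` which can support a `(χ, χ)`-equivariant function. -/
structure IsGelfandAntiInvolution (χ : H →* ℂ) (ι : G → G) : Prop where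
  map_mul : ∀ g g', ι (g * g') = ι g' * ι g
  involutive : Function.Involutive ι
  exists_map_eq : ∀ h : H, ∃ h' : H, ι h = h' ∧ χ h = χ h'
  double_coset : ∀ g, (∃ h h' : H, ι g = h * g * h' ∧ χ h * χ h' = 1) ∨
    ∃ h h' : H, h * g * h' = g ∧ χ h * χ h' ≠ 1

section HeckeOp

variable [Fintype H] (π : Representation ℂ G V) (χ : H →* ℂ)

/-- The image in `End V` of the element of the `(H, χ)`-Hecke algebra supported on `H g H`, up to
scaling. -/
noncomputable def heckeOp (g : G) : Module.End ℂ V :=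
  charProj π χ * π g * charProj π χ

variable {π χ} {ι : G → G}

lemma heckeOp_apply (g : G) (v : V) :
    heckeOp π χ g v = charProj π χ (π g (charProj π χ v)) := rfl

lemma heckeOp_mul_mul (h h' : H) (g : G) :
    heckeOp π χ (h * g * h') = (χ h * χ h') • heckeOp π χ g := by
  ext v
  rw [LinearMap.smul_apply, heckeOp_apply, heckeOp_apply, π.map_mul, π.map_mul,
    Module.End.mul_apply, Module.End.mul_apply, map_charProj, map_smul, map_smul, map_smul,
    charProj_map, smul_smul, mul_comm]

lemma heckeOp_mul_heckeOp (g g' : G) :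
    heckeOp π χ g * heckeOp π χ g' =
      (Fintype.card H : ℂ)⁻¹ • ∑ h : H, χ h⁻¹ • heckeOp π χ (g * h * g') := by
  ext v
  simp only [Module.End.mul_apply, LinearMap.smul_apply, LinearMap.sum_apply, heckeOp_apply,
    charProj_charProj, π.map_mul]
  rw [charProj_apply _ _ (π g' _)]
  simp only [map_smul, map_sum]

lemma IsGelfandAntiInvolution.heckeOp_map (hι : IsGelfandAntiInvolution χ ι) (g : G) :
    heckeOp π χ (ι g) = heckeOp π χ g := by
  have hcases : ∀ g, heckeOp π χ (ι g) = heckeOp π χ g ∨ heckeOp π χ g = 0 := by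
    intro g
    rcases hι.double_coset g with ⟨h, h', hg, hχ⟩ | ⟨h, h', hg, hχ⟩
    · exact Or.inl (by rw [hg, heckeOp_mul_mul, hχ, one_smul])
    · refine Or.inr (by_contra fun hne => hχ ?_)
      exact smul_left_injective ℂ hne
        (by simp only [one_smul]; rw [← heckeOp_mul_mul, hg])
  rcases hcases g with h | h
  · exact h
  · rcases hcases (ι g) with h' | h'
    · rw [← h', hι.involutive]
    · rw [h', h]

lemma IsGelfandAntiInvolution.heckeOp_comm (hι : IsGelfandAntiInvolution χ ι) (g g' : G) :
    heckeOp π χ g * heckeOp π χ g' = heckeOp π χ g' * heckeOp π χ g := by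
  choose σ hσ hχσ using hι.exists_map_eq
  have hσ_inv : Function.Involutive σ := fun h =>
    Subtype.ext (by rw [← hσ, ← hσ, hι.involutive])
  calc heckeOp π χ g * heckeOp π χ g'
    _ = (Fintype.card H : ℂ)⁻¹ • ∑ h : H, χ h⁻¹ • heckeOp π χ (ι g' * σ h * ι g) := by
      rw [heckeOp_mul_heckeOp]
      simp only [← hσ, mul_assoc, ← hι.map_mul]
      simp only [hι.heckeOp_map]
    _ = (Fintype.card H : ℂ)⁻¹ • ∑ h : H, χ h⁻¹ • heckeOp π χ (ι g' * h * ι g) := by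
      rw [← Equiv.sum_comp hσ_inv.toPerm]
      congr 1
      refine Finset.sum_congr rfl fun h _ => ?_
      have hχ : χ (σ h)⁻¹ = χ h⁻¹ := by
        refine mul_right_cancel₀ (b := χ h) ?_ ?_
        · exact right_ne_zero_of_mul_eq_one (map_inv_mul_map χ h)
        · rw [map_inv_mul_map, hχσ h, map_inv_mul_map]
      rw [Function.Involutive.coe_toPerm, hσ_inv, hχ]
    _ = heckeOp π χ (ι g') * heckeOp π χ (ι g) := (heckeOp_mul_heckeOp _ _).symm
    _ = heckeOp π χ g' * heckeOp π χ g := by rw [hι.heckeOp_map, hι.heckeOp_map]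

lemma IsGelfandAntiInvolution.exists_heckeOp_eq_smul [FiniteDimensional ℂ V]
    (hι : IsGelfandAntiInvolution χ ι)
    (hirr : ∀ W : Submodule ℂ V, (∀ g v, v ∈ W → π g v ∈ W) → W = ⊥ ∨ W = ⊤)
    {v₀ : V} (hv₀ : charProj π χ v₀ ≠ 0) (g : G) :
    ∃ c : ℂ, heckeOp π χ g = c • charProj π χ := by
  have hrange : ∀ x ∈ LinearMap.range (charProj π χ), charProj π χ x = x := by
    rintro _ ⟨v, rfl⟩
    exact charProj_charProj π χ v
  have : Nontrivial (LinearMap.range (charProj π χ)) :=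
    ⟨⟨⟨_, v₀, rfl⟩, 0, fun h => hv₀ (congrArg Subtype.val h)⟩⟩
  have hmaps : ∀ x ∈ LinearMap.range (charProj π χ), heckeOp π χ g x ∈
      LinearMap.range (charProj π χ) := fun x _ => ⟨_, (heckeOp_apply g x).symm⟩
  obtain ⟨c, hc⟩ := Module.End.exists_eigenvalue ((heckeOp π χ g).restrict hmaps)
  obtain ⟨⟨x, hx⟩, hxc⟩ := hc.exists_hasEigenvector
  have hxg : heckeOp π χ g x = c • x := congrArg Subtype.val hxc.apply_eq_smul
  have hx0 : x ≠ 0 := fun h => hxc.2 (Subtype.ext h)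
  have htop : LinearMap.eqLocus (heckeOp π χ g) (c • charProj π χ) = ⊤ := by
    refine eq_top_of_orbit_mem hirr hx0 fun g' => ?_
    have hg' : heckeOp π χ g' x = charProj π χ (π g' x) := by rw [heckeOp_apply, hrange x hx]
    calc heckeOp π χ g (π g' x) = heckeOp π χ g (heckeOp π χ g' x) := by
          rw [hg', heckeOp_apply, heckeOp_apply, charProj_charProj]
      _ = heckeOp π χ g' (heckeOp π χ g x) := by
          rw [← Module.End.mul_apply, hι.heckeOp_comm, Module.End.mul_apply]
      _ = (c • charProj π χ) (π g' x) := by rw [hxg, map_smul, hg', LinearMap.smul_apply]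
  exact ⟨c, LinearMap.ext fun v => by rw [← LinearMap.mem_eqLocus, htop]; trivial⟩

end HeckeOp

theorem IsGelfandAntiInvolution.exists_eq_smul [Finite H] [FiniteDimensional ℂ V]
    {π : Representation ℂ G V} {χ : H →* ℂ} {ι : G → G} (hι : IsGelfandAntiInvolution χ ι)
    (hirr : ∀ W : Submodule ℂ V, (∀ g v, v ∈ W → π g v ∈ W) → W = ⊥ ∨ W = ⊤)
    {l₁ l₂ : V →ₗ[ℂ] ℂ} (hl₁ : IsEquivariant π χ l₁) (hne : l₁ ≠ 0) (hl₂ : IsEquivariant π χ l₂) :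
    ∃ c : ℂ, l₂ = c • l₁ := by
  have := Fintype.ofFinite H
  obtain ⟨v, hv⟩ : ∃ v, l₁ v ≠ 0 := by
    by_contra! h
    exact hne (LinearMap.ext h)
  rw [← hl₁.apply_charProj] at hv
  set x := charProj π χ v with hx
  have hx0 : x ≠ 0 := fun h => hv (by rw [h, map_zero])
  refine ⟨l₂ x / l₁ x, ?_⟩
  rw [← LinearMap.eqLocus_eq_top]
  refine eq_top_of_orbit_mem hirr hx0 fun g => ?_
  obtain ⟨c, hc⟩ := hι.exists_heckeOp_eq_smul hirr hx0 g
  have hgx : charProj π χ (π g x) = c • x := by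
    rw [hx, ← LinearMap.smul_apply, ← hc, heckeOp_apply]
  have hl₁g : l₁ (π g x) = c * l₁ x := by rw [← hl₁.apply_charProj, hgx, map_smul, smul_eq_mul]
  have hl₂g : l₂ (π g x) = c * l₂ x := by rw [← hl₂.apply_charProj, hgx, map_smul, smul_eq_mul]
  rw [LinearMap.mem_eqLocus, LinearMap.smul_apply, hl₁g, hl₂g, smul_eq_mul]
  field_simp

end MultiplicityOne

section WhittakerUniqueness

variable {K : Type*} [Field K] {n : ℕ}

lemma superdiag_single (i j : Fin n) (a : K) :
    superdiag K (Matrix.single i j a) = if (j : ℕ) = i + 1 then a else 0 := by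
  by_cases hij : (j : ℕ) = i + 1
  · rw [if_pos hij, superdiag_eq_single hij, Matrix.single_apply_same]
    exact fun k l _ hk => Matrix.single_apply_of_row_ne hk.symm _ _ _
  · rw [if_neg hij, ← superdiag_zero (n := n)]
    refine superdiag_congr fun k l hkl => Matrix.single_apply_of_ne _ _ _ _ _ ?_
    rintro ⟨rfl, rfl⟩
    exact hij hkl

lemma isUnip_one_add_single {i j : Fin n} (hij : i < j) (a : K) :
    IsUnip K (1 + Matrix.single i j a) :=
  IsStrictUpper.isUnip_one_add fun k l hlk => Matrix.single_apply_of_ne _ _ _ _ _ (by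
    rintro ⟨rfl, rfl⟩
    exact absurd hij (not_lt.2 hlk))

/-- Transposition in the antidiagonal, `M ↦ w Mᵀ w` with `w` the antidiagonal permutation matrix:
the anti-involution of `GL_n` that preserves `U_n` and `ψ_n`. -/
def antiTranspose {R : Type*} (M : Matrix (Fin n) (Fin n) R) : Matrix (Fin n) (Fin n) R :=
  Mᵀ.submatrix Fin.rev Fin.rev

lemma antiTranspose_mul (M N : Matrix (Fin n) (Fin n) K) :
    antiTranspose (M * N) = antiTranspose N * antiTranspose M := by
  rw [antiTranspose, Matrix.transpose_mul]
  exact (Matrix.submatrix_mul_equiv Nᵀ Mᵀ Fin.rev Fin.revPerm Fin.rev).symm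

lemma antiTranspose_one : antiTranspose (1 : Matrix (Fin n) (Fin n) K) = 1 := by
  rw [antiTranspose, Matrix.transpose_one]
  exact Matrix.submatrix_one_equiv Fin.revPerm

lemma antiTranspose_antiTranspose {R : Type*} (M : Matrix (Fin n) (Fin n) R) :
    antiTranspose (antiTranspose M) = M := by
  ext i j
  simp [antiTranspose]

lemma IsUnip.antiTranspose {u : Matrix (Fin n) (Fin n) K} (hu : IsUnip K u) :
    IsUnip K (antiTranspose u) := by
  refine ⟨fun i => hu.1 _, fun i j hji => hu.2 _ _ ?_⟩
  rw [← Fin.lt_def, Fin.rev_lt_rev]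
  exact hji

lemma superdiag_antiTranspose (M : Matrix (Fin n) (Fin n) K) :
    superdiag K (antiTranspose M) = superdiag K M := by
  unfold superdiag
  rw [Finset.sum_comm, ← Equiv.sum_comp Fin.revPerm]
  refine Finset.sum_congr rfl fun i _ => ?_
  rw [← Equiv.sum_comp Fin.revPerm]
  refine Finset.sum_congr rfl fun j _ => if_congr ?_ (by simp [antiTranspose]) rfl
  simp only [Fin.revPerm_apply, Fin.val_rev]
  omega

/-- `antiTranspose` on `GL_n`. -/
def antiTransposeGL (g : GL (Fin n) K) : GL (Fin n) K where
  val := antiTranspose (g : Matrix (Fin n) (Fin n) K)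
  inv := antiTranspose ((g⁻¹ : GL (Fin n) K) : Matrix (Fin n) (Fin n) K)
  val_inv := by rw [← antiTranspose_mul, ← Units.val_mul, inv_mul_cancel, Units.val_one,
    antiTranspose_one]
  inv_val := by rw [← antiTranspose_mul, ← Units.val_mul, mul_inv_cancel, Units.val_one,
    antiTranspose_one]

lemma antiTransposeGL_mul (g h : GL (Fin n) K) :
    antiTransposeGL (g * h) = antiTransposeGL h * antiTransposeGL g :=
  Units.ext (antiTranspose_mul _ _)

lemma eq_one_of_forall_addChar_eq_mul {ψ : AddChar K ℂˣ} (hψ : ψ ≠ 1) {c : K}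
    (h : ∀ a, ψ a = ψ (a * c)) : c = 1 := by
  by_contra hc
  obtain ⟨a, ha⟩ := AddChar.ne_one_iff.1 hψ
  refine ha ?_
  have hdiv : a = a / (1 - c) - a / (1 - c) * c := by
    have : 1 - c ≠ 0 := sub_ne_zero.2 (Ne.symm hc)
    field_simp
  rw [hdiv, AddChar.map_sub_eq_div, ← h, div_self']

lemma single_mul_monomialMatrix (σ : Equiv.Perm (Fin n)) (t : Fin n → K) (i j : Fin n)
    (a : K) : Matrix.single i j a * monomialMatrix σ t = Matrix.single i (σ j) (a * t j) := by
  ext k l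
  rcases eq_or_ne k i with rfl | hk
  · rw [Matrix.single_mul_apply_same, monomialMatrix, Matrix.of_apply, Matrix.single_apply]
    simp [eq_comm]
  · rw [Matrix.single_mul_apply_of_ne _ _ _ _ _ hk, Matrix.single_apply_of_row_ne hk.symm]

lemma monomialMatrix_mul_single (σ : Equiv.Perm (Fin n)) (t : Fin n → K) (i j : Fin n) (a : K) :
    monomialMatrix σ t * Matrix.single (σ i) j a = Matrix.single i j (t i * a) := by
  ext k l
  rcases eq_or_ne l j with rfl | hl
  · rw [Matrix.mul_single_apply_same, monomialMatrix, Matrix.of_apply, Matrix.single_apply]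
    by_cases hik : i = k
    · simp [hik]
    · simp [hik]
  · rw [Matrix.mul_single_apply_of_ne _ _ _ _ _ hl, Matrix.single_apply_of_col_ne _ _ hl.symm]

lemma isLayered_of_compatible {ψ : AddChar K ℂˣ} (hψ : ψ ≠ 1) {σ : Equiv.Perm (Fin n)}
    {t : Fin n → K} (ht : ∀ i, t i ≠ 0)
    (hcompat : ∀ u u', IsUnip K u → IsUnip K u' → u * monomialMatrix σ t = monomialMatrix σ t * u' →
      ψ (superdiag K u) = ψ (superdiag K u')) :
    IsLayered (σ.trans Fin.revPerm) t := by
  intro i j hij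
  simp only [Equiv.trans_apply, Fin.revPerm_apply, Fin.rev_lt_rev]
  refine (lt_or_gt_of_ne (σ.injective.ne (show j ≠ i by rintro rfl; omega))).imp id fun hlt => ?_
  have hσij : (if (σ j : ℕ) = σ i + 1 then t j / t i else 0) = 1 := by
    refine eq_one_of_forall_addChar_eq_mul hψ fun a => ?_
    have h := hcompat (1 + Matrix.single i j a)
      (1 + Matrix.single (σ i) (σ j) (a * (t j / t i))) (isUnip_one_add_single (by omega) a)
      (isUnip_one_add_single hlt _) (by
        have hti := ht i
        rw [Matrix.add_mul, Matrix.mul_add, Matrix.one_mul, Matrix.mul_one,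
          single_mul_monomialMatrix, monomialMatrix_mul_single]
        congr 2
        field_simp)
    rw [superdiag_one_add, superdiag_one_add, superdiag_single, superdiag_single, if_pos hij] at h
    rw [h, mul_ite, mul_zero]
  split_ifs at hσij with hσ
  · refine ⟨?_, ((div_eq_one_iff_eq (ht i)).1 hσij).symm⟩
    simp only [Fin.val_rev]
    omega
  · exact absurd hσij zero_ne_one

lemma IsLayered.antiTranspose_monomialMatrix {σ : Equiv.Perm (Fin n)} {t : Fin n → K}
    (hσ : IsLayered (σ.trans Fin.revPerm) t) :
    antiTranspose (monomialMatrix σ t) = monomialMatrix σ t := by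
  have hinv : ∀ i, (σ (σ i).rev).rev = i ∧ t (σ i).rev = t i := hσ.apply_apply
  ext i j
  change (if i.rev = σ j.rev then t j.rev else 0) = if j = σ i then t i else 0
  have hiff : i.rev = σ j.rev ↔ j = σ i := by
    constructor
    · intro h
      have := (hinv j.rev).1
      rw [← h, Fin.rev_rev] at this
      exact (Fin.rev_injective this).symm
    · rintro rfl
      rw [Fin.rev_eq_iff, (hinv i).1]
  simp only [hiff]
  split_ifs with h
  · rw [h, (hinv i).2]
  · rfl

lemma antiTransposeGL_involutive :
    Function.Involutive (antiTransposeGL : GL (Fin n) K → GL (Fin n) K) :=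
  fun _ => Units.ext (antiTranspose_antiTranspose _)

lemma exists_antiTransposeGL_eq (ψ : AddChar K ℂˣ) (h : unipotentSubgroup K n) :
    ∃ h' : unipotentSubgroup K n, antiTransposeGL (h : GL (Fin n) K) = h' ∧
      whittakerChar ψ h = whittakerChar ψ h' :=
  ⟨⟨_, IsUnip.antiTranspose h.2⟩, rfl, by
    simp only [whittakerChar, MonoidHom.coe_mk, OneHom.coe_mk, psiN]
    exact congrArg (fun a => (ψ a : ℂ)) (superdiag_antiTranspose _).symm⟩

lemma antiTransposeGL_eq_self_of_compatible {ψ : AddChar K ℂˣ} (hψ : ψ ≠ 1) {g : GL (Fin n) K}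
    {σ : Equiv.Perm (Fin n)} {t : Fin n → K} (ht : ∀ i, t i ≠ 0) (hg : g.val = monomialMatrix σ t)
    (hcompat : ∀ v v' : unipotentSubgroup K n, (v * g : GL (Fin n) K) = g * v' →
      whittakerChar ψ v = whittakerChar ψ v') : antiTransposeGL g = g := by
  refine Units.ext ?_
  change antiTranspose _ = _
  rw [hg]
  refine (isLayered_of_compatible hψ ht fun v v' hv hv' hvv' => ?_).antiTranspose_monomialMatrix
  obtain ⟨v, hvU, rfl⟩ := hv.exists_val_eq
  obtain ⟨v', hvU', rfl⟩ := hv'.exists_val_eq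
  exact Units.ext (hcompat ⟨v, hvU⟩ ⟨v', hvU'⟩ (Units.ext (by simpa [hg] using hvv')))

lemma exists_antiTransposeGL_eq_mul_mul (ψ : AddChar K ℂˣ) {u u' : unipotentSubgroup K n}
    {g : GL (Fin n) K} (hfix : antiTransposeGL (u * g * u' : GL (Fin n) K) = u * g * u') :
    ∃ h h' : unipotentSubgroup K n, antiTransposeGL g = h * g * h' ∧
      whittakerChar ψ h * whittakerChar ψ h' = 1 := by
  obtain ⟨w, hw, hχw⟩ := exists_antiTransposeGL_eq ψ u⁻¹
  obtain ⟨w', hw', hχw'⟩ := exists_antiTransposeGL_eq ψ u'⁻¹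
  refine ⟨w' * u, u' * w, ?_, ?_⟩
  · have hg : g = (u⁻¹ : unipotentSubgroup K n) * (u * g * u') *
        (u'⁻¹ : unipotentSubgroup K n) := by
      push_cast
      group
    conv_lhs => rw [hg, antiTransposeGL_mul, antiTransposeGL_mul, hfix, hw, hw']
    push_cast
    group
  · rw [map_mul, map_mul, ← hχw, ← hχw', mul_mul_mul_comm, map_inv_mul_map, one_mul, mul_comm,
      map_inv_mul_map]

lemma exists_mul_mul_eq_self_of_ne {G : Type*} [Group G] {H : Subgroup G} {χ : H →* ℂ}
    {u u' v v' : H} {g : G} (hvv' : (v * (u * g * u') : G) = u * g * u' * v') (hne : χ v ≠ χ v') :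
    ∃ h h' : H, (h * g * h' : G) = g ∧ χ h * χ h' ≠ 1 := by
  refine ⟨u⁻¹ * v * u, u' * v'⁻¹ * u'⁻¹, ?_, fun hone => hne ?_⟩
  · calc ((u⁻¹ * v * u : H) * g * (u' * v'⁻¹ * u'⁻¹ : H) : G)
      _ = u⁻¹ * (v * (u * g * u')) * v'⁻¹ * u'⁻¹ := by push_cast; group
      _ = g := by rw [hvv']; push_cast; group
  · have hconj : χ (u⁻¹ * v * u) = χ v := by
      rw [map_mul, map_mul, mul_right_comm, map_inv_mul_map, one_mul]
    have hconj' : χ (u' * v'⁻¹ * u'⁻¹) = χ v'⁻¹ := by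
      rw [map_mul, map_mul, mul_rotate, mul_assoc, map_inv_mul_map, mul_one]
    rw [hconj, hconj'] at hone
    calc χ v
      _ = χ v * (χ v'⁻¹ * χ v') := by rw [map_inv_mul_map, mul_one]
      _ = χ v' := by rw [← mul_assoc, hone, one_mul]

lemma antiTransposeGL_double_coset {ψ : AddChar K ℂˣ} (hψ : ψ ≠ 1) (g : GL (Fin n) K) :
    (∃ h h' : unipotentSubgroup K n, antiTransposeGL g = h * g * h' ∧
        whittakerChar ψ h * whittakerChar ψ h' = 1) ∨
      ∃ h h' : unipotentSubgroup K n, (h * g * h' : GL (Fin n) K) = g ∧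
        whittakerChar ψ h * whittakerChar ψ h' ≠ 1 := by
  obtain ⟨u, hu, u', hu', σ, t, ht, hM⟩ := exists_unipotent_mul_mul_eq_monomialMatrix g
  lift u to unipotentSubgroup K n using hu
  lift u' to unipotentSubgroup K n using hu'
  by_cases hcompat : ∀ v v' : unipotentSubgroup K n,
      (v * (u * g * u') : GL (Fin n) K) = u * g * u' * v' →
        whittakerChar ψ v = whittakerChar ψ v'
  · exact Or.inl (exists_antiTransposeGL_eq_mul_mul ψ
      (antiTransposeGL_eq_self_of_compatible hψ ht hM hcompat))
  · push Not at hcompat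
    obtain ⟨v, v', hvv', hne⟩ := hcompat
    exact Or.inr (exists_mul_mul_eq_self_of_ne hvv' hne)

lemma isGelfandAntiInvolution_antiTransposeGL {ψ : AddChar K ℂˣ} (hψ : ψ ≠ 1) :
    IsGelfandAntiInvolution (whittakerChar (n := n) ψ) antiTransposeGL where
  map_mul := antiTransposeGL_mul
  involutive := antiTransposeGL_involutive
  exists_map_eq := exists_antiTransposeGL_eq ψ
  double_coset := antiTransposeGL_double_coset hψ

lemma isWhittaker_iff_isEquivariant {V : Type*} [AddCommGroup V] [Module ℂ V]
    {π : Representation ℂ (GL (Fin n) K) V} {ψ : AddChar K ℂˣ} {l : V →ₗ[ℂ] ℂ} :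
    IsWhittaker π (psiN ψ) l ↔ IsEquivariant π (whittakerChar ψ) l :=
  ⟨fun hl u v => hl u u.2 v, fun hl u hu v => hl ⟨u, hu⟩ v⟩

theorem IsWhittaker.exists_eq_smul [Finite K] {V : Type*} [AddCommGroup V] [Module ℂ V]
    [FiniteDimensional ℂ V] {π : Representation ℂ (GL (Fin n) K) V} (hirr : IsIrreducible π)
    {ψ : AddChar K ℂˣ} (hψ : ψ ≠ 1) {l₁ l₂ : V →ₗ[ℂ] ℂ} (hl₁ : IsWhittaker π (psiN ψ) l₁)
    (hne : l₁ ≠ 0) (hl₂ : IsWhittaker π (psiN ψ) l₂) : ∃ c : ℂ, l₂ = c • l₁ :=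
  (isGelfandAntiInvolution_antiTransposeGL hψ).exists_eq_smul hirr
    (isWhittaker_iff_isEquivariant.1 hl₁) hne (isWhittaker_iff_isEquivariant.1 hl₂)

end WhittakerUniqueness

section BlockMatrix

variable {R : Type*} {a b c d e f n : ℕ}

/-- The partition of the indices `0, …, n - 1` into the first `a` and the last `b`. -/
def finSplit (h : a + b = n) : Fin a ⊕ Fin b ≃ Fin n :=
  finSumFinEquiv.trans (finCongr h)

lemma val_finSplit_inl (h : a + b = n) (i : Fin a) : (finSplit h (Sum.inl i) : ℕ) = i := rfl

lemma val_finSplit_inr (h : a + b = n) (i : Fin b) : (finSplit h (Sum.inr i) : ℕ) = a + i := rfl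

/-- The `n × n` matrix with blocks `A B` over `C D`, for the row partition `a + b = n` and the
column partition `c + d = n`. -/
def blockMatrix (h : a + b = n) (h' : c + d = n) (A : Matrix (Fin a) (Fin c) R)
    (B : Matrix (Fin a) (Fin d) R) (C : Matrix (Fin b) (Fin c) R) (D : Matrix (Fin b) (Fin d) R) :
    Matrix (Fin n) (Fin n) R :=
  Matrix.reindex (finSplit h) (finSplit h') (Matrix.fromBlocks A B C D)

lemma blockMatrix_finSplit (h : a + b = n) (h' : c + d = n) (A : Matrix (Fin a) (Fin c) R)
    (B : Matrix (Fin a) (Fin d) R) (C : Matrix (Fin b) (Fin c) R) (D : Matrix (Fin b) (Fin d) R)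
    (i : Fin a ⊕ Fin b) (j : Fin c ⊕ Fin d) :
    blockMatrix h h' A B C D (finSplit h i) (finSplit h' j) = Matrix.fromBlocks A B C D i j := by
  simp [blockMatrix]

lemma exists_eq_blockMatrix (h : a + b = n) (h' : c + d = n) (M : Matrix (Fin n) (Fin n) R) :
    ∃ A B C D, M = blockMatrix h h' A B C D := by
  obtain ⟨N, rfl⟩ := (Matrix.reindex (finSplit h) (finSplit h')).surjective M
  exact ⟨_, _, _, _, by rw [blockMatrix, Matrix.fromBlocks_toBlocks]⟩

lemma blockMatrix_mul [NonUnitalNonAssocSemiring R] (h : a + b = n) (h' : c + d = n)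
    (h'' : e + f = n) (A : Matrix (Fin a) (Fin c) R) (B : Matrix (Fin a) (Fin d) R)
    (C : Matrix (Fin b) (Fin c) R) (D : Matrix (Fin b) (Fin d) R) (A' : Matrix (Fin c) (Fin e) R)
    (B' : Matrix (Fin c) (Fin f) R) (C' : Matrix (Fin d) (Fin e) R)
    (D' : Matrix (Fin d) (Fin f) R) :
    blockMatrix h h' A B C D * blockMatrix h' h'' A' B' C' D' =
      blockMatrix h h'' (A * A' + B * C') (A * B' + B * D') (C * A' + D * C')
        (C * B' + D * D') := by
  simp only [blockMatrix, Matrix.reindex_apply, Matrix.submatrix_mul_equiv,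
    Matrix.fromBlocks_multiply]

lemma blockMatrix_one [Zero R] [One R] (h : a + b = n) :
    blockMatrix h h 1 0 0 1 = (1 : Matrix (Fin n) (Fin n) R) := by
  rw [blockMatrix, Matrix.fromBlocks_one, Matrix.reindex_apply, Matrix.submatrix_one_equiv]

end BlockMatrix

section BlockGL

variable {K : Type*} [Field K] {a b n : ℕ}

/-- The block diagonal matrix with blocks `g` and `u`. -/
def blockDiag (h : a + b = n) (g : GL (Fin a) K) (u : GL (Fin b) K) : GL (Fin n) K where
  val := blockMatrix h h g 0 0 u
  inv := blockMatrix h h (g⁻¹ : GL (Fin a) K) 0 0 (u⁻¹ : GL (Fin b) K)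
  val_inv := by simp [blockMatrix_mul, ← Units.val_mul, blockMatrix_one, -Matrix.coe_units_inv]
  inv_val := by simp [blockMatrix_mul, ← Units.val_mul, blockMatrix_one, -Matrix.coe_units_inv]

/-- The block matrix with rows `1 y` and `0 1`. -/
def blockUpper (h : a + b = n) (y : Matrix (Fin a) (Fin b) K) : GL (Fin n) K where
  val := blockMatrix h h 1 y 0 1
  inv := blockMatrix h h 1 (-y) 0 1
  val_inv := by simp [blockMatrix_mul, blockMatrix_one]
  inv_val := by simp [blockMatrix_mul, blockMatrix_one]

/-- The block matrix with rows `1 0` and `x 1`. -/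
def blockLower (h : a + b = n) (x : Matrix (Fin b) (Fin a) K) : GL (Fin n) K where
  val := blockMatrix h h 1 0 x 1
  inv := blockMatrix h h 1 0 (-x) 1
  val_inv := by simp [blockMatrix_mul, blockMatrix_one]
  inv_val := by simp [blockMatrix_mul, blockMatrix_one]

variable (K) in
/-- The block permutation matrix with rows `0 1` and `1 0`, which exchanges the partitions `a + b`
and `b + a`. -/
def blockSwap (h : a + b = n) (h' : b + a = n) : GL (Fin n) K where
  val := blockMatrix h' h 0 1 1 0
  inv := blockMatrix h h' 0 1 1 0
  val_inv := by simp [blockMatrix_mul, blockMatrix_one]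
  inv_val := by simp [blockMatrix_mul, blockMatrix_one]

lemma blockDiag_one (h : a + b = n) : blockDiag h (1 : GL (Fin a) K) (1 : GL (Fin b) K) = 1 :=
  Units.ext (blockMatrix_one h)

lemma blockDiag_mul (h : a + b = n) (g g' : GL (Fin a) K) (u u' : GL (Fin b) K) :
    blockDiag h (g * g') (u * u') = blockDiag h g u * blockDiag h g' u' := by
  ext1
  simp [blockDiag, blockMatrix_mul]

lemma blockUpper_add (h : a + b = n) (y y' : Matrix (Fin a) (Fin b) K) :
    blockUpper h (y + y') = blockUpper h y * blockUpper h y' := by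
  ext1
  simp [blockUpper, blockMatrix_mul, add_comm]

lemma blockLower_add (h : a + b = n) (x x' : Matrix (Fin b) (Fin a) K) :
    blockLower h (x + x') = blockLower h x * blockLower h x' := by
  ext1
  simp [blockLower, blockMatrix_mul]

lemma blockDiag_mul_blockUpper (h : a + b = n) (g : GL (Fin a) K) (u : GL (Fin b) K)
    (y : Matrix (Fin a) (Fin b) K) :
    blockDiag h g u * blockUpper h y =
      blockUpper h (g.val * y * (u⁻¹).val) * blockDiag h g u := by
  ext1
  simp [blockDiag, blockUpper, blockMatrix_mul, Matrix.mul_assoc, -Matrix.coe_units_inv]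

lemma blockDiag_mul_blockLower (h : a + b = n) (g : GL (Fin a) K) (u : GL (Fin b) K)
    (x : Matrix (Fin b) (Fin a) K) :
    blockDiag h g u * blockLower h x =
      blockLower h (u.val * x * (g⁻¹).val) * blockDiag h g u := by
  ext1
  simp [blockDiag, blockLower, blockMatrix_mul, Matrix.mul_assoc, -Matrix.coe_units_inv]

lemma blockSwap_mul_blockDiag (h : a + b = n) (h' : b + a = n) (g : GL (Fin a) K)
    (u : GL (Fin b) K) :
    blockSwap K h h' * blockDiag h g u = blockDiag h' u g * blockSwap K h h' := by
  ext1
  simp [blockDiag, blockSwap, blockMatrix_mul]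

lemma blockSwap_mul_blockLower (h : a + b = n) (h' : b + a = n) (x : Matrix (Fin b) (Fin a) K) :
    blockSwap K h h' * blockLower h x = blockUpper h' x * blockSwap K h h' := by
  ext1
  simp [blockLower, blockUpper, blockSwap, blockMatrix_mul]

lemma blockUpper_mul_blockLower (h : a + b = n) {y : Matrix (Fin a) (Fin b) K}
    {x : Matrix (Fin b) (Fin a) K} (hyx : y * x = 0) {p : GL (Fin b) K}
    (hp : (p : Matrix (Fin b) (Fin b) K) = 1 - x * y) :
    blockUpper h y * blockLower h x = blockLower h x * blockDiag h 1 p * blockUpper h y := by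
  ext1
  simp [blockDiag, blockUpper, blockLower, blockMatrix_mul, hp, hyx]

lemma isUnip_blockMatrix (h : a + b = n) {A : Matrix (Fin a) (Fin a) K}
    {D : Matrix (Fin b) (Fin b) K} (hA : IsUnip K A) (hD : IsUnip K D)
    (B : Matrix (Fin a) (Fin b) K) : IsUnip K (blockMatrix h h A B 0 D) := by
  constructor
  · intro i
    obtain ⟨i, rfl⟩ := (finSplit h).surjective i
    rw [blockMatrix_finSplit]
    rcases i with i | i
    exacts [hA.1 i, hD.1 i]
  · intro i j hij
    obtain ⟨i, rfl⟩ := (finSplit h).surjective i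
    obtain ⟨j, rfl⟩ := (finSplit h).surjective j
    rw [blockMatrix_finSplit]
    rcases i with i | i <;> rcases j with j | j <;>
      simp only [val_finSplit_inl, val_finSplit_inr] at hij
    · exact hA.2 i j hij
    · omega
    · rfl
    · exact hD.2 i j (by omega)

lemma superdiag_blockMatrix (h : a + b = n) (A : Matrix (Fin a) (Fin a) K)
    (D : Matrix (Fin b) (Fin b) K) (B : Matrix (Fin a) (Fin b) K) (C : Matrix (Fin b) (Fin a) K) :
    superdiag K (blockMatrix h h A B C D) = superdiag K A + superdiag K D +
      ∑ i : Fin a, ∑ j : Fin b, if (i : ℕ) + 1 = a ∧ (j : ℕ) = 0 then B i j else 0 := by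
  simp only [superdiag, ← (finSplit h).sum_comp, blockMatrix_finSplit, Fintype.sum_sum_type,
    val_finSplit_inl, val_finSplit_inr, Matrix.fromBlocks_apply₁₁, Matrix.fromBlocks_apply₁₂,
    Matrix.fromBlocks_apply₂₁, Matrix.fromBlocks_apply₂₂, Finset.sum_add_distrib]
  have hB : ∀ (i : Fin a) (j : Fin b), a + j = i + 1 ↔ (i : ℕ) + 1 = a ∧ (j : ℕ) = 0 := by omega
  have hC : ∀ (i : Fin b) (j : Fin a), ¬ (j : ℕ) = a + i + 1 := by omega
  have hD : ∀ i j : Fin b, a + j = a + i + 1 ↔ (j : ℕ) = i + 1 := by omega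
  simp only [hB, hC, hD, if_false, Finset.sum_const_zero]
  rw [add_zero, ← add_assoc, add_right_comm]
  congr!

lemma blockDiag_mem_unipotentSubgroup (h : a + b = n) {g : GL (Fin a) K} {u : GL (Fin b) K}
    (hg : g ∈ unipotentSubgroup K a) (hu : u ∈ unipotentSubgroup K b) :
    blockDiag h g u ∈ unipotentSubgroup K n :=
  isUnip_blockMatrix h hg hu 0

lemma blockUpper_mem_unipotentSubgroup (h : a + b = n) (y : Matrix (Fin a) (Fin b) K) :
    blockUpper h y ∈ unipotentSubgroup K n :=
  isUnip_blockMatrix h isUnip_one isUnip_one y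

variable (ψ : AddChar K ℂˣ)

lemma psiN_blockDiag (h : a + b = n) (g : GL (Fin a) K) (u : GL (Fin b) K) :
    psiN ψ (blockDiag h g u) = psiN ψ g * psiN ψ u := by
  simp [psiN, blockDiag, superdiag_blockMatrix, AddChar.map_add_eq_mul]

lemma psiN_blockUpper_eq_one (h : a + b = n) {y : Matrix (Fin a) (Fin b) K}
    (hy : ∀ (i : Fin a) (j : Fin b), (i : ℕ) + 1 = a → (j : ℕ) = 0 → y i j = 0) :
    psiN ψ (blockUpper h y) = 1 := by
  have hcorner : ∀ (i : Fin a) (j : Fin b),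
      (if (i : ℕ) + 1 = a ∧ (j : ℕ) = 0 then y i j else 0) = 0 :=
    fun i j => ite_eq_right_iff.2 fun hij => hy i j hij.1 hij.2
  simp [psiN, blockUpper, superdiag_blockMatrix, superdiag_one, hcorner]

lemma psiN_blockUpper_corner (h : (a + 1) + (b + 1) = n)
    (y : Matrix (Fin (a + 1)) (Fin (b + 1)) K) :
    psiN ψ (blockUpper h y) = ψ (y (Fin.last a) 0) := by
  have hcorner : ∀ (i : Fin (a + 1)) (j : Fin (b + 1)),
      ((i : ℕ) + 1 = a + 1 ∧ (j : ℕ) = 0) ↔ i = Fin.last a ∧ j = 0 := by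
    simp only [Fin.ext_iff, Fin.val_last, Fin.val_zero, Nat.add_right_cancel_iff, implies_true]
  simp only [psiN, blockUpper, superdiag_blockMatrix, superdiag_one, hcorner, ite_and]
  simp

end BlockGL

section BlockEntries

variable {R : Type*} {a b c d e n : ℕ}

lemma blockMatrix_apply (h : a + b = n) (h' : c + d = n) (A : Matrix (Fin a) (Fin c) R)
    (B : Matrix (Fin a) (Fin d) R) (C : Matrix (Fin b) (Fin c) R) (D : Matrix (Fin b) (Fin d) R)
    (i j : Fin n) :
    blockMatrix h h' A B C D i j =
      if hi : (i : ℕ) < a then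
        if hj : (j : ℕ) < c then A ⟨i, hi⟩ ⟨j, hj⟩ else B ⟨i, hi⟩ ⟨j - c, by omega⟩
      else if hj : (j : ℕ) < c then C ⟨i - a, by omega⟩ ⟨j, hj⟩
        else D ⟨i - a, by omega⟩ ⟨j - c, by omega⟩ := by
  obtain ⟨i, rfl⟩ := (finSplit h).surjective i
  obtain ⟨j, rfl⟩ := (finSplit h').surjective j
  rw [blockMatrix_finSplit]
  rcases i with i | i <;> rcases j with j | j <;> simp [val_finSplit_inl, val_finSplit_inr]

variable {K : Type*} [Field K]

lemma blockDiag_blockDiag_one (h : a + c = n) (h' : b + d = n) (h'' : a + e = b)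
    (g : GL (Fin a) K) : blockDiag h' (blockDiag h'' g 1) 1 = blockDiag h g 1 := by
  ext i j
  simp only [blockDiag, blockMatrix_apply, Units.val_one, Matrix.one_apply, Fin.ext_iff,
    Matrix.zero_apply]
  split_ifs <;> first | rfl | omega

lemma exists_GL_row {ι : Type*} [Fintype ι] [DecidableEq ι] {v : ι → K} (hv : v ≠ 0) (i : ι) :
    ∃ g : GL ι K, g.val i = v := by
  obtain ⟨j, hj⟩ := Function.ne_iff.1 hv
  let M : Matrix ι ι K := (Matrix.updateRow 1 j v).submatrix (Equiv.swap i j) id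
  have hdet : M.det ≠ 0 := by
    rw [Matrix.det_permute, ← Matrix.cramer_transpose_apply, Matrix.transpose_one,
      Matrix.cramer_one, Module.End.one_apply]
    rcases Int.units_eq_one_or (Equiv.Perm.sign (Equiv.swap i j)) with hs | hs <;> simpa [hs]
  exact ⟨Matrix.GeneralLinearGroup.mkOfDetNeZero M hdet, funext fun k => by
    simp [Matrix.GeneralLinearGroup.mkOfDetNeZero, M]⟩

end BlockEntries

section PartialWhittaker

variable {K : Type*} [Field K] {V : Type*} [AddCommGroup V] [Module ℂ V] {a b n : ℕ}

lemma sum_eq_zero_of_map_add_eq_mul {A R : Type*} [AddGroup A] [Fintype A] [CommRing R]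
    [IsDomain R] {f : A → R} {c : R} (hc : c ≠ 1) {a₀ : A} (hf : ∀ a, f (a₀ + a) = c * f a) :
    ∑ a, f a = 0 := by
  have hsum : c * ∑ a, f a = ∑ a, f a := by
    rw [Finset.mul_sum, ← Equiv.sum_comp (Equiv.addLeft a₀) f]
    exact Finset.sum_congr rfl fun a _ => (hf a).symm
  by_contra hne
  exact hc ((mul_eq_right₀ hne).1 hsum)

lemma sum_dotProduct_eq_zero [Fintype K] {ψ : AddChar K ℂˣ} (hψ : ψ ≠ 1) {y : Fin a → K}
    (hy : y ≠ 0) : ∑ x : Fin a → K, (ψ (x ⬝ᵥ y) : ℂ) = 0 := by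
  obtain ⟨t, ht⟩ := AddChar.ne_one_iff.1 hψ
  obtain ⟨i, hi⟩ := Function.ne_iff.1 hy
  refine sum_eq_zero_of_map_add_eq_mul (a₀ := Pi.single i (t / y i)) (Units.val_eq_one.not.2 ht)
    fun x => ?_
  rw [add_dotProduct, single_dotProduct, div_mul_cancel₀ _ hi, AddChar.map_add_eq_mul,
    Units.val_mul]

/-- Equivariance of `l` under the unipotent matrices whose first `j` columns are those of the
identity. Whittaker functionals are the case `j = 1`. -/
def IsPartialWhittaker (π : Representation ℂ (GL (Fin n) K) V) (ψ : AddChar K ℂˣ) (j : ℕ)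
    (l : V →ₗ[ℂ] ℂ) : Prop :=
  ∀ u ∈ unipotentSubgroup K n, (∀ i k : Fin n, (k : ℕ) < j → u.val i k = (1 : Matrix _ _ K) i k) →
    ∀ v, l (π u v) = psiN ψ u * l v

variable {π : Representation ℂ (GL (Fin n) K) V} {ψ : AddChar K ℂˣ} {l : V →ₗ[ℂ] ℂ}

lemma IsPartialWhittaker.isWhittaker (hl : IsPartialWhittaker π ψ 1 l) :
    IsWhittaker π (psiN ψ) l := by
  refine fun u hu => hl u hu fun i k hk => ?_
  rcases eq_or_ne i k with rfl | hik
  · rw [hu.1, Matrix.one_apply_eq]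
  · rw [hu.2 i k (by omega), Matrix.one_apply_ne hik]

lemma blockDiag_mul_blockUpper_val (h : a + b = n) (p : GL (Fin b) K)
    (z : Matrix (Fin a) (Fin b) K) :
    (blockDiag h 1 p * blockUpper h z).val = blockMatrix h h 1 z 0 p := by
  simp [blockDiag, blockUpper, blockMatrix_mul]

lemma psiN_blockDiag_mul_blockUpper (ψ : AddChar K ℂˣ) (h : a + b = n) {p : GL (Fin b) K}
    (hp : p ∈ unipotentSubgroup K b) (z : Matrix (Fin a) (Fin b) K) :
    psiN ψ (blockDiag h 1 p * blockUpper h z) = psiN ψ p * psiN ψ (blockUpper h z) := by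
  rw [psiN_mul ψ (blockDiag_mem_unipotentSubgroup h (one_mem _) hp)
    (blockUpper_mem_unipotentSubgroup h z), psiN_blockDiag, psiN_one, one_mul]

lemma exists_eq_blockDiag_mul_blockUpper (h : a + b = n) {u : GL (Fin n) K}
    (hu : u ∈ unipotentSubgroup K n)
    (hcol : ∀ i k : Fin n, (k : ℕ) < a → u.val i k = (1 : Matrix _ _ K) i k) :
    ∃ p ∈ unipotentSubgroup K b, ∃ z, u = blockDiag h 1 p * blockUpper h z := by
  obtain ⟨A, z, C, D, hval⟩ := exists_eq_blockMatrix h h u.val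
  have hentry := fun i j => congrFun (congrFun hval (finSplit h i)) (finSplit h j)
  simp only [blockMatrix_finSplit] at hentry
  have hA : A = 1 := by
    ext i j
    rw [← Matrix.fromBlocks_apply₁₁ A z C D, ← hentry, hcol _ _ j.2, Matrix.one_apply,
      Matrix.one_apply]
    simp
  have hC : C = 0 := by
    ext i j
    rw [← Matrix.fromBlocks_apply₂₁ A z C D, ← hentry, hcol _ _ j.2, Matrix.one_apply_ne (by simp),
      Matrix.zero_apply]
  have hD : IsUnip K D := by
    refine ⟨fun i => ?_, fun i j hij => ?_⟩ <;> rw [← Matrix.fromBlocks_apply₂₂ A z C D, ← hentry]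
    · exact hu.1 _
    · exact hu.2 _ _ (Nat.add_lt_add_left hij a)
  obtain ⟨p, hp, rfl⟩ := hD.exists_val_eq
  exact ⟨p, hp, z, Units.ext (by rw [hval, hA, hC, blockDiag_mul_blockUpper_val])⟩

lemma isPartialWhittaker_of_blocks (h : a + b = n)
    (hl : ∀ p ∈ unipotentSubgroup K b, ∀ z v, l (π (blockDiag h 1 p * blockUpper h z) v) =
      psiN ψ p * psiN ψ (blockUpper h z) * l v) : IsPartialWhittaker π ψ a l := by
  intro u hu hcol v
  obtain ⟨p, hp, z, rfl⟩ := exists_eq_blockDiag_mul_blockUpper h hu hcol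
  rw [hl p hp, psiN_blockDiag_mul_blockUpper ψ h hp]

lemma psiN_blockUpper_of_col_eq_zero (ψ : AddChar K ℂˣ) (h : a + (b + 1) = n)
    {z : Matrix (Fin a) (Fin (b + 1)) K} (hz : ∀ i, z i 0 = 0) : psiN ψ (blockUpper h z) = 1 :=
  psiN_blockUpper_eq_one ψ h fun i j _ hj => by rw [Fin.ext (b := 0) hj, hz]

lemma isPartialWhittaker_succ_of_blocks (h : a + (b + 1) = n)
    (hl : ∀ p ∈ unipotentSubgroup K (b + 1), ∀ z : Matrix (Fin a) (Fin (b + 1)) K,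
      (∀ i, z i 0 = 0) → ∀ v, l (π (blockDiag h 1 p * blockUpper h z) v) = psiN ψ p * l v) :
    IsPartialWhittaker π ψ (a + 1) l := by
  intro u hu hcol v
  obtain ⟨p, hp, z, rfl⟩ :=
    exists_eq_blockDiag_mul_blockUpper h hu fun i k hk => hcol i k (Nat.lt_succ_of_lt hk)
  have hz : ∀ i, z i 0 = 0 := fun i => by
    have hentry := hcol (finSplit h (Sum.inl i)) (finSplit h (Sum.inr 0))
      (by simp [val_finSplit_inr])
    rwa [blockDiag_mul_blockUpper_val, blockMatrix_finSplit, Matrix.fromBlocks_apply₁₂,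
      Matrix.one_apply_ne (by simp)] at hentry
  rw [hl p hp z hz, psiN_blockDiag_mul_blockUpper ψ h hp, psiN_blockUpper_of_col_eq_zero ψ h hz,
    mul_one]

lemma IsPartialWhittaker.map_blocks (hl : IsPartialWhittaker π ψ (a + 1) l)
    (h : a + (b + 1) = n) {p : GL (Fin (b + 1)) K} (hp : p ∈ unipotentSubgroup K (b + 1))
    {z : Matrix (Fin a) (Fin (b + 1)) K} (hz : ∀ i, z i 0 = 0) (v : V) :
    l (π (blockDiag h 1 p * blockUpper h z) v) = psiN ψ p * l v := by
  have hcol : ∀ i k : Fin n, (k : ℕ) < a + 1 →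
      (blockDiag h 1 p * blockUpper h z).val i k = (1 : Matrix _ _ K) i k := by
    rw [blockDiag_mul_blockUpper_val, ← blockMatrix_one h]
    intro i k hk
    obtain ⟨i, rfl⟩ := (finSplit h).surjective i
    obtain ⟨k, rfl⟩ := (finSplit h).surjective k
    rw [blockMatrix_finSplit, blockMatrix_finSplit]
    rcases k with k | k
    · rcases i with i | i <;> rfl
    · obtain rfl : k = 0 := Fin.ext (by rw [val_finSplit_inr] at hk; rw [Fin.val_zero]; omega)
      rcases i with i | i
      · simp [hz]
      · rcases eq_or_ne i 0 with rfl | hi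
        · simp [hp.1 0]
        · simp [hp.2 i 0 (Fin.pos_iff_ne_zero.2 hi), Matrix.one_apply_ne hi]
  have hmem := mul_mem (blockDiag_mem_unipotentSubgroup h (one_mem _) hp)
    (blockUpper_mem_unipotentSubgroup h z)
  rw [hl _ hmem hcol, psiN_blockDiag_mul_blockUpper ψ h hp, psiN_blockUpper_of_col_eq_zero ψ h hz,
    mul_one]

/-- The elementary unipotent matrix with the column `y` above the diagonal entry `a + 1`. -/
def columnUpper (h : a + (b + 1) = n) (y : Fin a → K) : GL (Fin n) K :=
  blockUpper h (Matrix.vecMulVec y (Pi.single 0 1))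

lemma columnUpper_zero (h : a + (b + 1) = n) : columnUpper h (0 : Fin a → K) = 1 := by
  ext1
  simp [columnUpper, blockUpper, blockMatrix_one]

lemma columnUpper_mul_blocks (h : a + (b + 1) = n) (y : Fin a → K) (p : GL (Fin (b + 1)) K)
    (z : Matrix (Fin a) (Fin (b + 1)) K) :
    columnUpper h y * (blockDiag h 1 p * blockUpper h z) =
      blockDiag h 1 p * blockUpper h (z + Matrix.vecMulVec y (Pi.single 0 1 ᵥ* p.val) -
        Matrix.vecMulVec (y + z.col 0) (Pi.single 0 1)) * columnUpper h (y + z.col 0) := by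
  ext1
  simp [columnUpper, blockDiag, blockUpper, blockMatrix_mul, Matrix.vecMulVec_mul, add_comm]

section FourierColumn

variable [Fintype K]

/-- The component of `l` on which the matrices `columnUpper h y` act by `ψ (x ⬝ᵥ y)`, up to
scaling. -/
noncomputable def fourierColumn (π : Representation ℂ (GL (Fin n) K) V) (ψ : AddChar K ℂˣ)
    (l : V →ₗ[ℂ] ℂ) (h : a + (b + 1) = n) (x : Fin a → K) : V →ₗ[ℂ] ℂ :=
  ∑ y : Fin a → K, (ψ (-(x ⬝ᵥ y)) : ℂ) • (l ∘ₗ π (columnUpper h y))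

lemma fourierColumn_apply (h : a + (b + 1) = n) (x : Fin a → K) (v : V) :
    fourierColumn π ψ l h x v =
      ∑ y : Fin a → K, (ψ (-(x ⬝ᵥ y)) : ℂ) * l (π (columnUpper h y) v) := by
  simp [fourierColumn]

lemma sum_fourierColumn (hψ : ψ ≠ 1) (h : a + (b + 1) = n) :
    ∑ x, fourierColumn π ψ l h x = (Fintype.card (Fin a → K) : ℂ) • l := by
  simp only [fourierColumn]
  rw [Finset.sum_comm, Finset.sum_eq_single 0]
  · simp only [columnUpper_zero, dotProduct_zero, neg_zero, AddChar.map_zero_eq_one, map_one,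
      Units.val_one, one_smul, Finset.sum_const, Finset.card_univ, Nat.cast_smul_eq_nsmul]
    rfl
  · intro y _ hy
    simp only [← dotProduct_neg]
    rw [← Finset.sum_smul, sum_dotProduct_eq_zero hψ (neg_ne_zero.2 hy), zero_smul]
  · simp

lemma IsPartialWhittaker.fourierColumn_map_blocks (hl : IsPartialWhittaker π ψ (a + 1) l)
    (h : a + (b + 1) = n) (x : Fin a → K) {p : GL (Fin (b + 1)) K}
    (hp : p ∈ unipotentSubgroup K (b + 1)) (z : Matrix (Fin a) (Fin (b + 1)) K) (v : V) :
    fourierColumn π ψ l h x (π (blockDiag h 1 p * blockUpper h z) v) =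
      ψ (x ⬝ᵥ z.col 0) * psiN ψ p * fourierColumn π ψ l h x v := by
  have hterm : ∀ y, l (π (columnUpper h y) (π (blockDiag h 1 p * blockUpper h z) v)) =
      psiN ψ p * l (π (columnUpper h (y + z.col 0)) v) := by
    intro y
    rw [← Module.End.mul_apply, ← map_mul, columnUpper_mul_blocks, map_mul, Module.End.mul_apply]
    refine hl.map_blocks h hp (fun i => ?_) _
    simp [Matrix.vecMulVec_apply, hp.1 0, add_comm]
  simp only [fourierColumn_apply, hterm]
  rw [← Equiv.sum_comp (Equiv.subRight (z.col 0)), Finset.mul_sum]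
  refine Finset.sum_congr rfl fun y _ => ?_
  rw [Equiv.subRight_apply, sub_add_cancel, dotProduct_sub, neg_sub, sub_eq_add_neg,
    AddChar.map_add_eq_mul, Units.val_mul]
  ring

lemma IsPartialWhittaker.isPartialWhittaker_fourierColumn
    (hl : IsPartialWhittaker π ψ (a + 2) l) (h : a + 1 + (b + 1) = n) (g : GL (Fin (a + 1)) K) :
    IsPartialWhittaker π ψ (a + 1)
      (fourierColumn π ψ l h (g.val (Fin.last a)) ∘ₗ π (blockDiag h g⁻¹ 1)) := by
  refine isPartialWhittaker_of_blocks h fun p hp z v => ?_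
  have hconj : blockDiag h g⁻¹ 1 * (blockDiag h 1 p * blockUpper h z) =
      blockDiag h 1 p * blockUpper h ((g⁻¹).val * z) * blockDiag h g⁻¹ 1 := by
    rw [← mul_assoc, ← blockDiag_mul, one_mul, mul_one, mul_assoc (blockDiag h 1 p)]
    ext1
    simp [blockDiag, blockUpper, blockMatrix_mul, -Matrix.coe_units_inv]
  have hdot : g.val (Fin.last a) ⬝ᵥ ((g⁻¹).val * z).col 0 = z (Fin.last a) 0 := by
    change (g.val * ((g⁻¹).val * z)) (Fin.last a) 0 = _
    rw [← Matrix.mul_assoc, ← Units.val_mul, mul_inv_cancel, Units.val_one, Matrix.one_mul]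
  rw [LinearMap.comp_apply, LinearMap.comp_apply, ← Module.End.mul_apply, ← map_mul, hconj,
    map_mul, Module.End.mul_apply, hl.fourierColumn_map_blocks h _ hp, hdot,
    psiN_blockUpper_corner, mul_comm (psiN ψ p)]

variable [DecidableEq K]

lemma IsCuspidal.sum_blockUpper (hπ : IsCuspidal π) (h : a + b = n) (ha : 1 ≤ a) (hb : 1 ≤ b) :
    ∑ y : Matrix (Fin a) (Fin b) K, π (blockUpper h y) = 0 := by
  rw [← hπ a b ha hb h]
  exact Finset.sum_congr rfl fun y _ => congrArg π (toGL_coe (blockUpper h y)).symm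

lemma IsPartialWhittaker.fourierColumn_zero (hπ : IsCuspidal π)
    (hl : IsPartialWhittaker π ψ (a + 1) l) (h : a + (b + 1) = n) (ha : 1 ≤ a) :
    fourierColumn π ψ l h 0 = 0 := by
  ext v
  have hinv : ∀ y : Matrix (Fin a) (Fin (b + 1)) K,
      fourierColumn π ψ l h 0 (π (blockUpper h y) v) = fourierColumn π ψ l h 0 v := fun y => by
    simpa [blockDiag_one, psiN_one] using hl.fourierColumn_map_blocks h 0 (one_mem _) y v
  have hsum : ∑ y : Matrix (Fin a) (Fin (b + 1)) K,
      fourierColumn π ψ l h 0 (π (blockUpper h y) v) = 0 := by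
    rw [← map_sum, ← LinearMap.sum_apply, hπ.sum_blockUpper h ha (Nat.le_add_left 1 b),
      LinearMap.zero_apply, map_zero]
  rw [LinearMap.zero_apply]
  simpa only [hinv, Finset.sum_const, Finset.card_univ, smul_eq_zero, Fintype.card_ne_zero,
    false_or] using hsum

lemma IsPartialWhittaker.mem_of_forall_comp_mem (hψ : ψ ≠ 1) (hπ : IsCuspidal π)
    (hl : IsPartialWhittaker π ψ (a + 2) l) (h : a + 1 + (b + 1) = n)
    {S : Submodule ℂ (V →ₗ[ℂ] ℂ)}
    (hS : ∀ l', IsPartialWhittaker π ψ (a + 1) l' → ∀ g : GL (Fin (a + 1)) K,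
      l' ∘ₗ π (blockDiag h g 1) ∈ S) : l ∈ S := by
  have hcard : (Fintype.card (Fin (a + 1) → K) : ℂ) ≠ 0 := Nat.cast_ne_zero.2 Fintype.card_ne_zero
  suffices hmem : (Fintype.card (Fin (a + 1) → K) : ℂ) • l ∈ S from (S.smul_mem_iff hcard).1 hmem
  rw [← sum_fourierColumn (π := π) (l := l) hψ h]
  refine Submodule.sum_mem _ fun x _ => ?_
  rcases eq_or_ne x 0 with rfl | hx
  · rw [hl.fourierColumn_zero hπ h (Nat.le_add_left 1 a)]
    exact zero_mem _
  · obtain ⟨g, rfl⟩ := exists_GL_row hx (Fin.last a)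
    have hmem := hS _ (hl.isPartialWhittaker_fourierColumn h g) g
    rwa [LinearMap.comp_assoc, ← Module.End.mul_eq_comp, ← map_mul, ← blockDiag_mul,
      inv_mul_cancel, mul_one, blockDiag_one, map_one, Module.End.one_eq_id,
      LinearMap.comp_id] at hmem

theorem IsPartialWhittaker.mem_span (hψ : ψ ≠ 1) (hπ : IsCuspidal π) (h : a + (b + 1) = n)
    (hl : IsPartialWhittaker π ψ (a + 1) l) :
    l ∈ Submodule.span ℂ {l' | ∃ lam, IsWhittaker π (psiN ψ) lam ∧
      ∃ g : GL (Fin a) K, l' = lam ∘ₗ π (blockDiag h g 1)} := by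
  induction a generalizing b l with
  | zero =>
    refine Submodule.subset_span ⟨l, hl.isWhittaker, 1, ?_⟩
    rw [blockDiag_one, map_one, Module.End.one_eq_id, LinearMap.comp_id]
  | succ a ih =>
    refine hl.mem_of_forall_comp_mem hψ hπ h fun l' hl' g => ?_
    have h' : a + ((b + 1) + 1) = n := by omega
    have hmem := Submodule.mem_map_of_mem (f := LinearMap.lcomp ℂ ℂ (π (blockDiag h g 1)))
      (ih h' hl')
    rw [Submodule.map_span] at hmem
    refine Submodule.span_mono ?_ hmem
    rintro _ ⟨_, ⟨lam, hlam, g', rfl⟩, rfl⟩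
    refine ⟨lam, hlam, blockDiag rfl g' (1 : GL (Fin 1) K) * g, ?_⟩
    rw [← mul_one (1 : GL (Fin (b + 1)) K), blockDiag_mul, mul_one, blockDiag_blockDiag_one h',
      map_mul, LinearMap.lcomp_apply', LinearMap.comp_assoc, Module.End.mul_eq_comp]

end FourierColumn

end PartialWhittaker

section TailColumns

variable {K : Type*} [Field K] {m d r k : ℕ}

/-- The matrix obtained from `x` by adding rows of zeros at the bottom; it is meant for `r ≤ d`. -/
def padBottom (d : ℕ) (x : Matrix (Fin r) (Fin m) K) : Matrix (Fin d) (Fin m) K :=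
  fun i j => if hi : (i : ℕ) < r then x ⟨i, hi⟩ j else 0

lemma padBottom_apply_of_le (x : Matrix (Fin r) (Fin m) K) {i : Fin d} (hi : r ≤ (i : ℕ))
    (j : Fin m) : padBottom d x i j = 0 :=
  dif_neg hi.not_gt

lemma padBottom_add (x x' : Matrix (Fin r) (Fin m) K) :
    padBottom d (x + x') = padBottom d x + padBottom d x' := by
  ext i j
  by_cases hi : (i : ℕ) < r <;> simp [padBottom, hi]

lemma padBottom_mul (x : Matrix (Fin r) (Fin m) K) (g : Matrix (Fin m) (Fin m) K) :
    padBottom d (x * g) = padBottom d x * g := by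
  ext i j
  by_cases hi : (i : ℕ) < r <;> simp [padBottom, hi, Matrix.mul_apply]

lemma padBottom_single {c : Fin r} {c' : Fin d} (hc : (c' : ℕ) = c) (i : Fin m) (t : K) :
    padBottom d (Matrix.single c i t) = Matrix.single c' i t := by
  ext l j
  by_cases hl : (l : ℕ) < r
  · simp [padBottom, hl, Matrix.single_apply, Fin.ext_iff, hc]
  · have hne : c' ≠ l := by rintro rfl; omega
    rw [padBottom_apply_of_le _ (not_lt.1 hl), Matrix.single_apply_of_row_ne hne]

variable [Fintype K]

open scoped Classical in
variable (K m d k) in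
/-- The `m × d` matrices supported on the last `k` columns. -/
noncomputable def tailColumns : Finset (Matrix (Fin m) (Fin d) K) :=
  {y | ∀ (i : Fin m) (j : Fin d), (j : ℕ) + k < d → y i j = 0}

lemma mem_tailColumns {y : Matrix (Fin m) (Fin d) K} :
    y ∈ tailColumns K m d k ↔ ∀ (i : Fin m) (j : Fin d), (j : ℕ) + k < d → y i j = 0 := by
  simp [tailColumns]

lemma mem_tailColumns_succ {y : Matrix (Fin m) (Fin (d + 1)) K} :
    y ∈ tailColumns K m (d + 1) d ↔ ∀ i, y i 0 = 0 := by
  rw [mem_tailColumns]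
  refine forall_congr' fun i => ⟨fun hy => hy 0 (by simp), fun hy j hj => ?_⟩
  rw [Fin.ext (b := 0) (show (j : ℕ) = 0 by omega), hy]

lemma tailColumns_mono {k' : ℕ} (hk : k ≤ k') : tailColumns K m d k ⊆ tailColumns K m d k' :=
  fun y hy => mem_tailColumns.2 fun i j hj => mem_tailColumns.1 hy i j (by omega)

lemma mul_padBottom_of_mem_tailColumns (hd : r + k ≤ d) {y : Matrix (Fin m) (Fin d) K}
    (hy : y ∈ tailColumns K m d k) (x : Matrix (Fin r) (Fin m) K) : y * padBottom d x = 0 := by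
  ext i j
  rw [Matrix.mul_apply, Matrix.zero_apply]
  refine Finset.sum_eq_zero fun l _ => ?_
  rcases lt_or_ge (l : ℕ) r with hl | hl
  · rw [mem_tailColumns.1 hy i l (by omega), zero_mul]
  · rw [padBottom_apply_of_le x hl, mul_zero]

lemma padBottom_mul_apply_of_mem_tailColumns (hd : r + k + 1 = d) {y : Matrix (Fin m) (Fin d) K}
    (hy : y ∈ tailColumns K m d k) (x : Matrix (Fin r) (Fin m) K) {i j : Fin d}
    (hij : (j : ℕ) ≤ i + 1) : (padBottom d x * y) i j = 0 := by
  rw [Matrix.mul_apply]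
  refine Finset.sum_eq_zero fun l _ => ?_
  rcases lt_or_ge (i : ℕ) r with hi | hi
  · rw [mem_tailColumns.1 hy l j (by omega), mul_zero]
  · rw [padBottom_apply_of_le x hi, zero_mul]

lemma exists_first_column_ne_zero {y : Matrix (Fin m) (Fin (d + 1)) K}
    (hy : y ∈ tailColumns K m (d + 1) d) (hyk : y ∉ tailColumns K m (d + 1) k) :
    ∃ (i : Fin m) (c : Fin d), (c : ℕ) + k < d ∧ y i c.succ ≠ 0 ∧
      ∀ i' (j : Fin (d + 1)), j ≤ c.castSucc → y i' j = 0 := by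
  classical
  rw [mem_tailColumns] at hyk
  push Not at hyk
  obtain ⟨i₀, j₀, hj₀, hne₀⟩ := hyk
  have hex : ∃ j : ℕ, ∃ hj : j < d + 1, ∃ i, y i ⟨j, hj⟩ ≠ 0 := ⟨j₀, j₀.2, i₀, hne₀⟩
  obtain ⟨hj, i, hne⟩ := Nat.find_spec hex
  have hle : Nat.find hex ≤ j₀ := Nat.find_min' hex ⟨j₀.2, i₀, hne₀⟩
  have hpos : Nat.find hex ≠ 0 := fun h0 => by
    have h0' : (⟨Nat.find hex, hj⟩ : Fin (d + 1)) = 0 := Fin.ext h0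
    exact hne (h0' ▸ mem_tailColumns_succ.1 hy i)
  refine ⟨i, ⟨Nat.find hex - 1, by omega⟩, by simp only; omega, ?_, fun i' j hjc => ?_⟩
  · convert hne
    simp only [Fin.succ_mk]
    omega
  · by_contra hne'
    refine Nat.find_min hex (m := j) ?_ ⟨j.2, i', hne'⟩
    have := Fin.le_def.1 hjc
    simp only [Fin.val_castSucc] at this
    omega

end TailColumns

section Exchange

variable {K : Type*} [Field K] {V : Type*} [AddCommGroup V] [Module ℂ V] {m d e k r n : ℕ}
  {π : Representation ℂ (GL (Fin n) K) V} {ψ : AddChar K ℂˣ} {l lam : V →ₗ[ℂ] ℂ}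

lemma IsWhittaker.map_swap_mul_lower (hlam : IsWhittaker π (psiN ψ) lam) (h : m + d = n)
    (h' : d + m = n) {x : Matrix (Fin d) (Fin m) K} {y : Matrix (Fin m) (Fin d) K}
    (hyx : y * x = 0) (hxy : IsStrictUpper (x * y))
    (hx : ∀ (i : Fin d) (j : Fin m), (i : ℕ) + 1 = d → x i j = 0) (v : V) :
    lam (π (blockSwap K h h' * blockUpper h y * blockLower h x) v) =
      ψ (-superdiag K (x * y)) * lam (π (blockSwap K h h' * blockUpper h y) v) := by
  have hneg : IsStrictUpper (-(x * y)) := fun i j hji => by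
    rw [Matrix.neg_apply, hxy i j hji, neg_zero]
  have hsuper : superdiag K (-(x * y)) = -superdiag K (x * y) :=
    eq_neg_of_add_eq_zero_left (by rw [← superdiag_add, neg_add_cancel, superdiag_zero])
  obtain ⟨p, hp, hpval⟩ := hneg.isUnip_one_add.exists_val_eq
  have hcomm : blockSwap K h h' * blockUpper h y * blockLower h x =
      blockUpper h' x * blockDiag h' p 1 * (blockSwap K h h' * blockUpper h y) := by
    rw [mul_assoc, blockUpper_mul_blockLower h hyx (hpval.trans (sub_eq_add_neg _ _).symm),
      ← mul_assoc, ← mul_assoc, blockSwap_mul_blockLower, mul_assoc (blockUpper h' x),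
      blockSwap_mul_blockDiag h h']
    simp only [mul_assoc]
  have hupper := blockUpper_mem_unipotentSubgroup h' x
  have hdiag := blockDiag_mem_unipotentSubgroup h' hp (one_mem (unipotentSubgroup K m))
  rw [hcomm, map_mul, Module.End.mul_apply, hlam _ (mul_mem hupper hdiag), psiN_mul ψ hupper hdiag,
    psiN_blockUpper_eq_one ψ h' fun i j hi _ => hx i j hi, psiN_blockDiag, psiN_one, one_mul,
    mul_one, psiN, hpval, superdiag_one_add, hsuper]

lemma IsWhittaker.map_swap_mul_lower_single (hlam : IsWhittaker π (psiN ψ) lam)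
    (h : m + (e + 1) = n) (h' : e + 1 + m = n) {y : Matrix (Fin m) (Fin (e + 1)) K} {c : Fin e}
    (hy : ∀ i (j : Fin (e + 1)), j ≤ c.castSucc → y i j = 0) (i : Fin m) (t : K) (v : V) :
    lam (π (blockSwap K h h' * blockUpper h y * blockLower h (Matrix.single c.castSucc i t)) v) =
      ψ (-(t * y i c.succ)) * lam (π (blockSwap K h h' * blockUpper h y) v) := by
  have hrow : ∀ a b, a ≠ c.castSucc → (Matrix.single c.castSucc i t * y) a b = 0 := fun a b ha =>
    Matrix.single_mul_apply_of_ne _ _ _ _ _ ha _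
  have hstrict : IsStrictUpper (Matrix.single c.castSucc i t * y) := by
    intro a b hba
    rcases eq_or_ne a c.castSucc with rfl | ha
    · rw [Matrix.single_mul_apply_same, hy i b hba, mul_zero]
    · exact hrow a b ha
  have hmul : y * Matrix.single c.castSucc i t = 0 := by
    ext a b
    rcases eq_or_ne b i with rfl | hb
    · rw [Matrix.mul_single_apply_same, hy a _ le_rfl, zero_mul, Matrix.zero_apply]
    · rw [Matrix.mul_single_apply_of_ne _ _ _ _ _ hb, Matrix.zero_apply]
  have hsuper : superdiag K (Matrix.single c.castSucc i t * y) = t * y i c.succ := by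
    rw [superdiag_eq_single (a := c.castSucc) (b := c.succ) rfl fun a b _ ha => hrow a b ha,
      Matrix.single_mul_apply_same]
  have hlast : ∀ (a : Fin (e + 1)) (b : Fin m), (a : ℕ) + 1 = e + 1 →
      Matrix.single c.castSucc i t a b = 0 := fun a b ha =>
    Matrix.single_apply_of_row_ne (fun hca => by
      have := c.2
      rw [← hca, Fin.val_castSucc] at ha
      omega) _ _ _
  rw [hlam.map_swap_mul_lower h h' hmul hstrict hlast, hsuper]

variable [Fintype K]

lemma IsWhittaker.sum_padBottom_of_mem (hlam : IsWhittaker π (psiN ψ) lam) (h : m + d = n)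
    (h' : d + m = n) (hd : r + k + 1 = d) {y : Matrix (Fin m) (Fin d) K}
    (hy : y ∈ tailColumns K m d k) (v : V) :
    ∑ x : Matrix (Fin r) (Fin m) K,
        lam (π (blockSwap K h h' * blockUpper h y * blockLower h (padBottom d x)) v) =
      (Fintype.card (Matrix (Fin r) (Fin m) K) : ℂ) *
        lam (π (blockSwap K h h' * blockUpper h y) v) := by
  rw [← nsmul_eq_mul, ← Finset.card_univ, ← Finset.sum_const]
  refine Finset.sum_congr rfl fun x _ => ?_
  have hxy : superdiag K (padBottom d x * y) = 0 := by
    rw [← superdiag_zero (n := d)]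
    exact superdiag_congr fun i j hij => padBottom_mul_apply_of_mem_tailColumns hd hy x hij.le
  rw [hlam.map_swap_mul_lower h h' (mul_padBottom_of_mem_tailColumns (by omega) hy x)
    (fun i j hij => padBottom_mul_apply_of_mem_tailColumns hd hy x (by omega))
    (fun i j hi => padBottom_apply_of_le x (by omega) j), hxy, neg_zero, AddChar.map_zero_eq_one,
    Units.val_one, one_mul]

lemma IsWhittaker.sum_padBottom_of_notMem (hψ : ψ ≠ 1) (hlam : IsWhittaker π (psiN ψ) lam)
    (h : m + (e + 1) = n) (h' : e + 1 + m = n) (he : r + k = e)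
    {y : Matrix (Fin m) (Fin (e + 1)) K} (hy : y ∈ tailColumns K m (e + 1) e)
    (hyk : y ∉ tailColumns K m (e + 1) k) (v : V) :
    ∑ x : Matrix (Fin r) (Fin m) K,
        lam (π (blockSwap K h h' * blockUpper h y * blockLower h (padBottom (e + 1) x)) v) = 0 := by
  obtain ⟨t, ht⟩ := AddChar.ne_one_iff.1 hψ
  obtain ⟨i, c, hck, hne, hzero⟩ := exists_first_column_ne_zero hy hyk
  have hcr : (c : ℕ) < r := by omega
  -- Translating `x` by a multiple of `E_{c, i}` adds `-t` to the superdiagonal of `x * y`.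
  refine sum_eq_zero_of_map_add_eq_mul (a₀ := Matrix.single ⟨c, hcr⟩ i (-t / y i c.succ))
    (Units.val_eq_one.not.2 ht) fun x => ?_
  have hpad := padBottom_single (c := ⟨c, hcr⟩) (c' := c.castSucc) rfl i (-t / y i c.succ)
  rw [padBottom_add, hpad, blockLower_add, ← mul_assoc, map_mul, Module.End.mul_apply,
    hlam.map_swap_mul_lower_single h h' hzero, div_mul_cancel₀ _ hne, neg_neg,
    ← Module.End.mul_apply, ← map_mul]

end Exchange

section SwapSum

variable {K : Type*} [Field K] {V : Type*} [AddCommGroup V] [Module ℂ V] {m d e k r n : ℕ}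

lemma IsUnip.mul_apply_zero {u : Matrix (Fin (d + 1)) (Fin (d + 1)) K} (hu : IsUnip K u)
    (y : Matrix (Fin m) (Fin (d + 1)) K) (i : Fin m) : (y * u) i 0 = y i 0 := by
  rw [Matrix.mul_apply, Fin.sum_univ_succ, hu.1, mul_one, add_eq_left]
  exact Finset.sum_eq_zero fun j _ => by rw [hu.2 j.succ 0 (by simp), mul_zero]

variable [Fintype K]

/-- The functional `v ↦ ∑ lam (π ([[0, 1], [1, y]]) v)`, over the `m × d` matrices `y` supported on
the last `k` columns. It is the inner sum on the dual side of the functional equation. -/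
noncomputable def swapSum (π : Representation ℂ (GL (Fin n) K) V) (h : m + d = n) (h' : d + m = n)
    (k : ℕ) (lam : V →ₗ[ℂ] ℂ) : V →ₗ[ℂ] ℂ :=
  ∑ y ∈ tailColumns K m d k, lam ∘ₗ π (blockSwap K h h' * blockUpper h y)

variable {π : Representation ℂ (GL (Fin n) K) V} {ψ : AddChar K ℂˣ} {lam : V →ₗ[ℂ] ℂ}

lemma swapSum_apply (h : m + d = n) (h' : d + m = n) (v : V) :
    swapSum π h h' k lam v =
      ∑ y ∈ tailColumns K m d k, lam (π (blockSwap K h h' * blockUpper h y) v) := by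
  simp [swapSum]

lemma swapSum_smul (h : m + d = n) (h' : d + m = n) (c : ℂ) :
    swapSum π h h' k (c • lam) = c • swapSum π h h' k lam := by
  simp only [swapSum, LinearMap.smul_comp, Finset.smul_sum]

lemma sum_swapSum_padBottom (hψ : ψ ≠ 1) (hlam : IsWhittaker π (psiN ψ) lam)
    (h : m + (e + 1) = n) (h' : e + 1 + m = n) (he : r + k = e) (v : V) :
    ∑ x : Matrix (Fin r) (Fin m) K,
        swapSum π h h' e lam (π (blockLower h (padBottom (e + 1) x)) v) =
      (Fintype.card (Matrix (Fin r) (Fin m) K) : ℂ) * swapSum π h h' k lam v := by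
  simp only [swapSum_apply, ← Module.End.mul_apply, ← map_mul]
  rw [Finset.sum_comm, Finset.mul_sum, ← Finset.sum_subset (tailColumns_mono (by omega))
    fun y hy hyk => hlam.sum_padBottom_of_notMem hψ h h' he hy hyk v]
  exact Finset.sum_congr rfl fun y hy => hlam.sum_padBottom_of_mem h h' (by omega) hy v

lemma sum_tailColumns_mul_add {M : Type*} [AddCommMonoid M] {p : GL (Fin (e + 1)) K}
    (hp : p ∈ unipotentSubgroup K (e + 1)) {z : Matrix (Fin m) (Fin (e + 1)) K}
    (hz : ∀ i, z i 0 = 0) (f : Matrix (Fin m) (Fin (e + 1)) K → M) :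
    ∑ y ∈ tailColumns K m (e + 1) e, f (y * p.val + z) = ∑ y ∈ tailColumns K m (e + 1) e, f y := by
  refine Finset.sum_nbij' (fun y => y * p.val + z) (fun y => (y - z) * (p⁻¹).val) ?_ ?_ ?_ ?_
    fun _ _ => rfl
  · simp only [mem_tailColumns_succ, Matrix.add_apply, hz, add_zero, IsUnip.mul_apply_zero hp,
      imp_self, implies_true]
  · simp only [mem_tailColumns_succ, IsUnip.mul_apply_zero (inv_mem hp), Matrix.sub_apply, hz,
      sub_zero, imp_self, implies_true]
  · intro y _
    rw [add_sub_cancel_right, Matrix.mul_assoc, ← Units.val_mul, mul_inv_cancel, Units.val_one,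
      Matrix.mul_one]
  · intro y _
    rw [Matrix.mul_assoc, ← Units.val_mul, inv_mul_cancel, Units.val_one, Matrix.mul_one,
      sub_add_cancel]

lemma IsWhittaker.isPartialWhittaker_swapSum (hlam : IsWhittaker π (psiN ψ) lam)
    (h : m + (e + 1) = n) (h' : e + 1 + m = n) :
    IsPartialWhittaker π ψ (m + 1) (swapSum π h h' e lam) := by
  refine isPartialWhittaker_succ_of_blocks h fun p hp z hz v => ?_
  have hcomm : ∀ y, blockSwap K h h' * blockUpper h y * (blockDiag h 1 p * blockUpper h z) =
      blockDiag h' p 1 * (blockSwap K h h' * blockUpper h (y * p.val + z)) := by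
    intro y
    have hy : blockDiag h 1 p * blockUpper h (y * p.val) = blockUpper h y * blockDiag h 1 p := by
      rw [blockDiag_mul_blockUpper, Units.val_one, Matrix.one_mul, Matrix.mul_assoc,
        ← Units.val_mul, mul_inv_cancel, Units.val_one, Matrix.mul_one]
    rw [blockUpper_add, mul_assoc, ← mul_assoc (blockUpper h y), ← hy, mul_assoc, ← mul_assoc,
      blockSwap_mul_blockDiag h h', mul_assoc]
  have hterm : ∀ y, lam (π (blockSwap K h h' * blockUpper h y)
      (π (blockDiag h 1 p * blockUpper h z) v)) =
      psiN ψ p * lam (π (blockSwap K h h' * blockUpper h (y * p.val + z)) v) := by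
    intro y
    rw [← Module.End.mul_apply, ← map_mul, hcomm, map_mul, Module.End.mul_apply,
      hlam _ (blockDiag_mem_unipotentSubgroup h' hp (one_mem _)), psiN_blockDiag, psiN_one,
      mul_one]
  rw [swapSum_apply, swapSum_apply, Finset.sum_congr rfl fun y _ => hterm y, ← Finset.mul_sum,
    sum_tailColumns_mul_add hp hz fun y => lam (π (blockSwap K h h' * blockUpper h y) v)]

end SwapSum

section GroupPairing

variable {G : Type*} [Group G] [Fintype G] {V W : Type*} [AddCommGroup V] [Module ℂ V]
  [AddCommGroup W] [Module ℂ W] (ρ : Representation ℂ G V) (τ : Representation ℂ G W)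

/-- The invariant bilinear form on `V × W` obtained by integrating the product of the matrix
coefficients attached to `l` and `mu` over `G`. -/
noncomputable def groupPairing (l : V →ₗ[ℂ] ℂ) (mu : W →ₗ[ℂ] ℂ) (v : V) (w : W) : ℂ :=
  ∑ g : G, l (ρ g v) * mu (τ g w)

lemma groupPairing_smul_left (c : ℂ) (l : V →ₗ[ℂ] ℂ) (mu : W →ₗ[ℂ] ℂ) :
    groupPairing ρ τ (c • l) mu = c • groupPairing ρ τ l mu := by
  ext v w
  simp [groupPairing, Finset.mul_sum, mul_assoc]

lemma groupPairing_smul_right (c : ℂ) (l : V →ₗ[ℂ] ℂ) (mu : W →ₗ[ℂ] ℂ) :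
    groupPairing ρ τ l (c • mu) = c • groupPairing ρ τ l mu := by
  ext v w
  simp [groupPairing, Finset.mul_sum, mul_left_comm]

lemma groupPairing_comp_left (a : G) (l : V →ₗ[ℂ] ℂ) (mu : W →ₗ[ℂ] ℂ) :
    groupPairing ρ τ (l ∘ₗ ρ a) mu = groupPairing ρ τ l (mu ∘ₗ τ a⁻¹) := by
  ext v w
  simp only [groupPairing, LinearMap.comp_apply, ← Module.End.mul_apply, ← map_mul]
  rw [← Equiv.sum_comp (Equiv.mulLeft a⁻¹)]
  simp

lemma exists_groupPairing_eq_of_mem_span {l l₀ : V →ₗ[ℂ] ℂ}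
    (hl : l ∈ Submodule.span ℂ (Set.range fun a => l₀ ∘ₗ ρ a)) (mu : W →ₗ[ℂ] ℂ) :
    ∃ mu', groupPairing ρ τ l mu = groupPairing ρ τ l₀ mu' := by
  induction hl using Submodule.span_induction with
  | mem l hl =>
    obtain ⟨a, rfl⟩ := hl
    exact ⟨_, groupPairing_comp_left ρ τ a l₀ mu⟩
  | zero => exact ⟨0, by ext v w; simp [groupPairing]⟩
  | add l l' _ _ hl hl' =>
    obtain ⟨⟨mu₁, h₁⟩, mu₂, h₂⟩ := And.intro hl hl'
    refine ⟨mu₁ + mu₂, ?_⟩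
    ext v w
    have hv₁ := congrFun (congrFun h₁ v) w
    have hv₂ := congrFun (congrFun h₂ v) w
    simp only [groupPairing] at hv₁ hv₂
    simp only [groupPairing, LinearMap.add_apply, add_mul, mul_add, Finset.sum_add_distrib, hv₁,
      hv₂]
  | smul c l _ hl =>
    obtain ⟨mu', h⟩ := hl
    exact ⟨c • mu', by rw [groupPairing_smul_left, groupPairing_smul_right, h]⟩

variable {ρ} {H : Subgroup G} [Fintype H] {χ χ' : H →* ℂ} {l : V →ₗ[ℂ] ℂ}

lemma IsEquivariant.groupPairing_comp_charProj (hl : IsEquivariant ρ χ l)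
    (hχ : ∀ h, χ h * χ' h = 1) (mu : W →ₗ[ℂ] ℂ) :
    groupPairing ρ τ l (mu ∘ₗ charProj τ χ') = groupPairing ρ τ l mu := by
  have hterm : ∀ (h : H) v w,
      χ' h⁻¹ * groupPairing ρ τ l (mu ∘ₗ τ h) v w = groupPairing ρ τ l mu v w := by
    intro h v w
    have hcomp : l ∘ₗ ρ (h : G)⁻¹ = χ h⁻¹ • l := by
      ext v
      exact hl h⁻¹ v
    rw [← inv_inv (h : G), ← groupPairing_comp_left, hcomp, groupPairing_smul_left,
      Pi.smul_apply, Pi.smul_apply, smul_eq_mul, ← mul_assoc, mul_comm (χ' _), hχ, one_mul]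
  have hproj : ∀ v w, groupPairing ρ τ l (mu ∘ₗ charProj τ χ') v w =
      (Fintype.card H : ℂ)⁻¹ • ∑ h : H, χ' h⁻¹ * groupPairing ρ τ l (mu ∘ₗ τ h) v w := by
    intro v w
    simp only [groupPairing, LinearMap.comp_apply, charProj_apply, map_smul, map_sum, smul_eq_mul,
      Finset.mul_sum]
    rw [Finset.sum_comm]
    refine Finset.sum_congr rfl fun h _ => Finset.sum_congr rfl fun g _ => ?_
    ring
  ext v w
  simp only [hproj, hterm, inv_card_smul_sum_const]

end GroupPairing

section FunctionalEquation

variable {K : Type*} [Field K] {V W : Type*} [AddCommGroup V] [Module ℂ V] [AddCommGroup W]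
  [Module ℂ W] {m e k r n : ℕ}

/-- The embedding `g ↦ diag(g, 1)` of `GL_a` into `GL_n`, as a homomorphism. -/
def blockDiagHom {a b : ℕ} (h : a + b = n) : GL (Fin a) K →* GL (Fin n) K where
  toFun g := blockDiag h g 1
  map_one' := blockDiag_one h
  map_mul' g g' := by rw [← blockDiag_mul, one_mul]

lemma exists_isWhittaker_forall_eq_smul [Finite K] [FiniteDimensional ℂ V]
    {π : Representation ℂ (GL (Fin n) K) V} (hirr : IsIrreducible π) {ψ : AddChar K ℂˣ}
    (hψ : ψ ≠ 1) : ∃ l₀, IsWhittaker π (psiN ψ) l₀ ∧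
      ∀ l, IsWhittaker π (psiN ψ) l → ∃ c : ℂ, l = c • l₀ := by
  by_cases hex : ∃ l₀, IsWhittaker π (psiN ψ) l₀ ∧ l₀ ≠ 0
  · obtain ⟨l₀, hl₀, hne⟩ := hex
    exact ⟨l₀, hl₀, fun l hl => hl₀.exists_eq_smul hirr hψ hne hl⟩
  · push Not at hex
    exact ⟨0, fun u _ v => by simp, fun l hl => ⟨0, by rw [hex l hl, zero_smul]⟩⟩

variable {π : Representation ℂ (GL (Fin n) K) V} {τ : Representation ℂ (GL (Fin m) K) W}
  {ψ : AddChar K ℂˣ} {lam : V →ₗ[ℂ] ℂ} {mu : W →ₗ[ℂ] ℂ}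

lemma IsWhittaker.isEquivariant_comp_blockDiagHom {b : ℕ} (hlam : IsWhittaker π (psiN ψ) lam)
    (h : m + b = n) :
    IsEquivariant (π.comp (blockDiagHom h)) (whittakerChar (n := m) ψ) lam := fun u v => by
  change lam (π (blockDiag h u 1) v) = psiN ψ (u : GL (Fin m) K) * lam v
  rw [hlam _ (blockDiag_mem_unipotentSubgroup h u.2 (one_mem _)), psiN_blockDiag, psiN_one, mul_one]

lemma psiN_mul_psiN_inv (u : GL (Fin m) K) : psiN ψ u * psiN ψ⁻¹ u = 1 := by
  rw [psiN_inv_addChar]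
  exact mul_inv_cancel₀ (Units.ne_zero _)

variable [Fintype K] [DecidableEq K]

lemma IsWhittaker.exists_groupPairing_eq_isWhittaker (hψ : ψ ≠ 1) (hπ : IsCuspidal π)
    (h : m + (e + 1) = n) (hlam : IsWhittaker π (psiN ψ) lam)
    (huniq : ∀ lam', IsWhittaker π (psiN ψ) lam' → ∃ c : ℂ, lam' = c • lam)
    {l : V →ₗ[ℂ] ℂ} (hl : IsPartialWhittaker π ψ (m + 1) l) (mu : W →ₗ[ℂ] ℂ) :
    ∃ mu', IsWhittaker τ (psiN ψ⁻¹) mu' ∧ groupPairing (π.comp (blockDiagHom h)) τ l mu =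
      groupPairing (π.comp (blockDiagHom h)) τ lam mu' := by
  have hspan : l ∈ Submodule.span ℂ (Set.range fun g => lam ∘ₗ π.comp (blockDiagHom h) g) := by
    refine Submodule.span_le.2 ?_ (hl.mem_span hψ hπ h)
    rintro _ ⟨lam', hlam', g, rfl⟩
    obtain ⟨c, rfl⟩ := huniq lam' hlam'
    rw [LinearMap.smul_comp]
    exact Submodule.smul_mem _ c (Submodule.subset_span ⟨g, rfl⟩)
  obtain ⟨mu', hmu'⟩ := exists_groupPairing_eq_of_mem_span _ τ hspan mu
  have := Fintype.ofFinite (unipotentSubgroup K m)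
  refine ⟨mu' ∘ₗ charProj τ (whittakerChar ψ⁻¹),
    isWhittaker_iff_isEquivariant.2 (isEquivariant_comp_charProj mu'), ?_⟩
  rw [hmu', (hlam.isEquivariant_comp_blockDiagHom h).groupPairing_comp_charProj τ fun u =>
    psiN_mul_psiN_inv u.1]

theorem exists_groupPairing_swapSum_eq_smul [FiniteDimensional ℂ V] [FiniteDimensional ℂ W]
    (hψ : ψ ≠ 1) (hπirr : IsIrreducible π) (hπ : IsCuspidal π) (hτirr : IsIrreducible τ)
    (h : m + (e + 1) = n) (h' : e + 1 + m = n) :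
    ∃ c : ℂ, ∀ lam, IsWhittaker π (psiN ψ) lam → ∀ mu, IsWhittaker τ (psiN ψ⁻¹) mu →
      groupPairing (π.comp (blockDiagHom h)) τ (swapSum π h h' e lam) mu =
        c • groupPairing (π.comp (blockDiagHom h)) τ lam mu := by
  have hψ_inv : ψ⁻¹ ≠ 1 := fun hinv => hψ <| DFunLike.ext _ _ fun a => by
    simpa using DFunLike.congr_fun hinv (-a)
  obtain ⟨lam₀, hlam₀, hlam_uniq⟩ := exists_isWhittaker_forall_eq_smul hπirr hψ
  obtain ⟨mu₀, -, hmu_uniq⟩ := exists_isWhittaker_forall_eq_smul hτirr hψ_inv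
  obtain ⟨mu', hmu', hpair⟩ := hlam₀.exists_groupPairing_eq_isWhittaker (τ := τ) hψ hπ h hlam_uniq
    (hlam₀.isPartialWhittaker_swapSum h h') mu₀
  obtain ⟨c, rfl⟩ := hmu_uniq mu' hmu'
  refine ⟨c, fun lam hlam mu hmu => ?_⟩
  obtain ⟨a, rfl⟩ := hlam_uniq lam hlam
  obtain ⟨b, rfl⟩ := hmu_uniq mu hmu
  rw [swapSum_smul]
  simp only [groupPairing_smul_left, groupPairing_smul_right, hpair]
  rw [smul_comm a c, smul_comm b c]

lemma sum_groupPairing_swapSum_padBottom (hψ : ψ ≠ 1) (hlam : IsWhittaker π (psiN ψ) lam)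
    (h : m + (e + 1) = n) (h' : e + 1 + m = n) (he : r + k = e) (v : V) (w : W) :
    ∑ x : Matrix (Fin r) (Fin m) K, groupPairing (π.comp (blockDiagHom h)) τ
        (swapSum π h h' e lam) mu (π (blockLower h (padBottom (e + 1) x)) v) w =
      (Fintype.card (Matrix (Fin r) (Fin m) K) : ℂ) *
        groupPairing (π.comp (blockDiagHom h)) τ (swapSum π h h' k lam) mu v w := by
  simp only [groupPairing]
  rw [Finset.sum_comm, Finset.mul_sum]
  refine Finset.sum_congr rfl fun g _ => ?_
  rw [← Finset.sum_mul, ← mul_assoc]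
  congr 1
  have hcomm : ∀ x : Matrix (Fin r) (Fin m) K,
      π.comp (blockDiagHom h) g (π (blockLower h (padBottom (e + 1) x)) v) =
        π (blockLower h (padBottom (e + 1) (x * (g⁻¹).val))) (π (blockDiag h g 1) v) := by
    intro x
    change π (blockDiag h g 1) _ = _
    rw [← Module.End.mul_apply, ← map_mul, blockDiag_mul_blockLower, Units.val_one, Matrix.one_mul,
      ← padBottom_mul, map_mul, Module.End.mul_apply]
  have hbij : Function.Bijective fun x : Matrix (Fin r) (Fin m) K => x * (g⁻¹).val :=
    Function.bijective_iff_has_inverse.2 ⟨fun x => x * g.val,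
      fun x => by simp [Matrix.mul_assoc, ← Units.val_mul, -Matrix.coe_units_inv],
      fun x => by simp [Matrix.mul_assoc, ← Units.val_mul, -Matrix.coe_units_inv]⟩
  simp only [hcomm]
  rw [hbij.sum_comp fun x => swapSum π h h' e lam
    (π (blockLower h (padBottom (e + 1) x)) (π (blockDiag h g 1) v))]
  exact sum_swapSum_padBottom hψ hlam h h' he _

end FunctionalEquation

section PadLeft

variable {K : Type*} [Field K] {m d k : ℕ}

/-- The matrix obtained from `y` by adding columns of zeros on the left, for `k ≤ d`. -/
def padLeft (hk : k ≤ d) (y : Matrix (Fin m) (Fin k) K) : Matrix (Fin m) (Fin d) K :=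
  fun i j => if hj : d - k ≤ (j : ℕ) then y i ⟨j - (d - k), by omega⟩ else 0

lemma sum_padLeft [Fintype K] (hk : k ≤ d) {M : Type*} [AddCommMonoid M]
    (f : Matrix (Fin m) (Fin d) K → M) :
    ∑ y : Matrix (Fin m) (Fin k) K, f (padLeft hk y) = ∑ y ∈ tailColumns K m d k, f y := by
  refine Finset.sum_nbij' (padLeft hk)
    (fun y => y.submatrix id fun j : Fin k => ⟨d - k + j, by omega⟩) ?_ ?_ ?_ ?_ fun _ _ => rfl
  · exact fun y _ => mem_tailColumns.2 fun i j hj => dif_neg (by omega)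
  · exact fun y _ => Finset.mem_univ _
  · intro y _
    ext i j
    simp [padLeft]
  · intro y hy
    ext i j
    rw [padLeft]
    split_ifs with hj
    · rw [Matrix.submatrix_apply, id]
      congr 1
      exact Fin.ext (by simp only; omega)
    · exact (mem_tailColumns.1 hy i j (by omega)).symm

end PadLeft

section BlockIntegrals

variable {K : Type*} [Field K] [DecidableEq K] {m n d k : ℕ}

lemma toGL_Amat (hm : m < n) (hk : k ≤ n - m - 1) (h : m + d = n) (g : GL (Fin m) K)
    (x : Matrix (Fin (n - m - 1 - k)) (Fin m) K) :
    toGL (Amat hm hk g.val x) = blockDiag h g 1 * blockLower h (padBottom d x) := by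
  refine toGL_eq_of_val_eq ?_
  simp only [blockDiag, blockLower, Units.val_mul, Units.val_one, blockMatrix_mul, Matrix.mul_one,
    Matrix.one_mul, Matrix.mul_zero, Matrix.zero_mul, add_zero, zero_add]
  ext i j
  simp only [blockMatrix_apply, Amat, padBottom]
  split_ifs <;> simp_all [Matrix.one_apply, Fin.ext_iff] <;> omega

lemma toGL_Bmat (hm : m < n) (hk : k ≤ n - m - 1) (h : m + d = n) (h' : d + m = n) (hkd : k ≤ d)
    (g : GL (Fin m) K) (y : Matrix (Fin m) (Fin k) K) :
    toGL (Bmat hm hk g.val y) =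
      blockSwap K h h' * blockUpper h (padLeft hkd y) * blockDiag h g 1 := by
  refine toGL_eq_of_val_eq ?_
  simp only [blockDiag, blockUpper, blockSwap, Units.val_mul, Units.val_one, blockMatrix_mul,
    Matrix.mul_one, Matrix.one_mul, Matrix.mul_zero, Matrix.zero_mul, add_zero, zero_add]
  ext i j
  simp only [blockMatrix_apply, Bmat, padLeft, Matrix.one_apply, Matrix.zero_apply, Fin.ext_iff]
  split_ifs <;> first | rfl | omega | (congr! 2 <;> omega)

variable [Fintype K] {V W : Type*} [AddCommGroup V] [Module ℂ V] [AddCommGroup W] [Module ℂ W]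
  (π : Representation ℂ (GL (Fin n) K) V) (τ : Representation ℂ (GL (Fin m) K) W)
  (lam : V →ₗ[ℂ] ℂ) (mu : W →ₗ[ℂ] ℂ)

lemma sum_sum_Amat (hm : m < n) (hk : k ≤ n - m - 1) (h : m + d = n) (v : V) (w : W) :
    ∑ g : GL (Fin m) K, ∑ x : Matrix (Fin (n - m - 1 - k)) (Fin m) K,
        lam (π (toGL (Amat hm hk g.val x)) v) * mu (τ g w) =
      ∑ x : Matrix (Fin (n - m - 1 - k)) (Fin m) K, groupPairing (π.comp (blockDiagHom h)) τ
        lam mu (π (blockLower h (padBottom d x)) v) w := by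
  rw [Finset.sum_comm]
  refine Finset.sum_congr rfl fun x _ => Finset.sum_congr rfl fun g _ => ?_
  rw [toGL_Amat hm hk h, map_mul, Module.End.mul_apply]
  rfl

lemma sum_sum_Bmat (hm : m < n) (hk : k ≤ n - m - 1) (h : m + d = n) (h' : d + m = n) (v : V)
    (w : W) :
    ∑ g : GL (Fin m) K, ∑ y : Matrix (Fin m) (Fin k) K,
        lam (π (toGL (Bmat hm hk g.val y)) v) * mu (τ g w) =
      groupPairing (π.comp (blockDiagHom h)) τ (swapSum π h h' k lam) mu v w := by
  refine Finset.sum_congr rfl fun g _ => ?_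
  have hkd : k ≤ d := by omega
  rw [← Finset.sum_mul, swapSum_apply, ← sum_padLeft hkd]
  simp only [toGL_Bmat hm hk h h' hkd, map_mul, Module.End.mul_apply]
  rfl

lemma card_matrix_fin {R : Type*} [Fintype R] (r m : ℕ) :
    Fintype.card (Matrix (Fin r) (Fin m) R) = Fintype.card R ^ (r * m) := by
  rw [Fintype.card_congr Matrix.of.symm]
  simp [pow_mul, pow_right_comm]

lemma gamma_normalization {q r e m k : ℕ} (hq : q ≠ 0) (he : r + k = e) {c A B : ℂ}
    (hc : (q : ℂ) ^ (r * m) * B = c * A) :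
    c * ((q : ℂ) ^ (e * m))⁻¹ * (q : ℂ) ^ (k * m) * A = B := by
  have : (q : ℂ) ≠ 0 := Nat.cast_ne_zero.2 hq
  subst he
  rw [add_mul, pow_add]
  field_simp
  linear_combination -hc

end BlockIntegrals

theorem existence_of_gamma
    (q : ℕ) (hq : Fintype.card F = q)
    (ψ : AddChar F ℂˣ) (hψ : ∃ a : F, ψ a ≠ 1)
    (n m : ℕ) (hm1 : 1 ≤ m) (hnm : m < n)
    {V W : Type*} [AddCommGroup V] [Module ℂ V] [FiniteDimensional ℂ V] [Nontrivial V]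
    [AddCommGroup W] [Module ℂ W] [FiniteDimensional ℂ W] [Nontrivial W]
    (π : Representation ℂ (GL (Fin n) F) V)
    (τ : Representation ℂ (GL (Fin m) F) W)
    (hπirr : IsIrreducible π) (hπcusp : IsCuspidal π)
    (hτirr : IsIrreducible τ)
    (hτgen : ∃ mu : W →ₗ[ℂ] ℂ, mu ≠ 0 ∧ IsWhittaker τ (psiN ψ) mu) :
    ∃ γ : ℂ, ∀ (k : ℕ) (hk : k ≤ n - m - 1)
      (lam : V →ₗ[ℂ] ℂ), IsWhittaker π (psiN ψ) lam →
      ∀ v : V, ∀ mu : W →ₗ[ℂ] ℂ, IsWhittaker τ (fun u => (psiN ψ u)⁻¹) mu → ∀ w : W,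
      γ * (q : ℂ) ^ (k * m) * ((UnipFinset F m).card : ℂ)⁻¹ *
          ∑ g : GL (Fin m) F, ∑ x : Matrix (Fin (n - m - 1 - k)) (Fin m) F,
            lam (π (toGL (Amat hnm hk (Units.val g) x)) v) * mu (τ g w)
        = ((UnipFinset F m).card : ℂ)⁻¹ *
          ∑ g : GL (Fin m) F, ∑ y : Matrix (Fin m) (Fin k) F,
            lam (π (toGL (Bmat hnm hk (Units.val g) y)) v) * mu (τ g w) := by
  have h : m + (n - m - 1 + 1) = n := by omega
  have h' : n - m - 1 + 1 + m = n := by omega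
  have hψ_ne : ψ ≠ 1 := AddChar.ne_one_iff.2 hψ
  obtain ⟨c, hc⟩ := exists_groupPairing_swapSum_eq_smul hψ_ne hπirr hπcusp hτirr h h'
  refine ⟨c * ((q : ℂ) ^ ((n - m - 1) * m))⁻¹, fun k hk lam hlam v mu hmu w => ?_⟩
  have he : n - m - 1 - k + k = n - m - 1 := by omega
  replace hmu : IsWhittaker τ (psiN ψ⁻¹) mu := fun u hu w => by rw [hmu u hu, psiN_inv_addChar]
  rw [sum_sum_Amat π τ lam mu hnm hk h, sum_sum_Bmat π τ lam mu hnm hk h h', mul_right_comm,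
    mul_comm]
  congr 1
  refine gamma_normalization (hq ▸ Fintype.card_ne_zero) he ?_
  rw [← hq, ← Nat.cast_pow, ← card_matrix_fin,
    ← sum_groupPairing_swapSum_padBottom hψ_ne hlam h h' he]
  simp only [hc lam hlam mu hmu, Pi.smul_apply, smul_eq_mul, Finset.mul_sum]

end Stmt0
end

section
/- Let F be a finite field with q elements, ψ : F → ℂˣ a nontrivial additive character, and (π, V) an irreducible generic finite-dimensional complex representation of GL_n(F) with trace character χ_π. Define J_{π,ψ_n}(g) = |U_n(F)|^{-1} Σ_{u ∈ U_n(F)} χ_π(gu) ψ_n(u)^{-1} for g ∈ GL_n(F). Then: (1) J_{π,ψ_n}(u₁ g u₂) = ψ_n(u₁)ψ_n(u₂) J_{π,ψ_n}(g) for all u₁, u₂ ∈ U_n(F) and g ∈ GL_n(F); (2) J_{π,ψ_n}(I_n) = 1; and (3) J_{π,ψ_n} lies in the Whittaker model of π, i.e. there exist a nonzero ψ_n-Whittaker functional λ on π and a vector v ∈ V such that J_{π,ψ_n}(g) = λ(π(g)v) for all g ∈ GL_n(F). -/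
/-!
Statement 1: properties of the normalized Bessel function of an irreducible generic
representation of `GL_n(F)` over a finite field (Gelfand, Proposition 4.5).
-/

open Matrix BigOperators

namespace Stmt1

variable (F : Type*) [Field F] [Fintype F] [DecidableEq F]

noncomputable instance {n : ℕ} : Fintype (GL (Fin n) F) :=
  inferInstanceAs (Fintype (Matrix (Fin n) (Fin n) F)ˣ)

/-- A matrix is upper triangular unipotent. -/
def IsUnip {n : ℕ} (u : Matrix (Fin n) (Fin n) F) : Prop :=
  (∀ i, u i i = 1) ∧ ∀ i j : Fin n, (j : ℕ) < (i : ℕ) → u i j = 0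

open scoped Classical in
/-- The subgroup `U_n(F)` of upper triangular unipotent matrices, as a finset of `GL n F`. -/
noncomputable def UnipFinset (n : ℕ) : Finset (GL (Fin n) F) :=
  Finset.univ.filter fun u => IsUnip F (u : Matrix (Fin n) (Fin n) F)

/-- The sum of the superdiagonal entries of a matrix. -/
def superdiag {n : ℕ} (u : Matrix (Fin n) (Fin n) F) : F :=
  ∑ i : Fin n, ∑ j : Fin n, if (j : ℕ) = (i : ℕ) + 1 then u i j else 0

variable {F}

/-- The character `ψ_n` of `U_n(F)`: `ψ_n(u) = ψ(u_{1,2} + ⋯ + u_{n-1,n})`,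
as a complex-valued function on `GL n F`. -/
noncomputable def psiN (ψ : AddChar F ℂˣ) {n : ℕ} (u : GL (Fin n) F) : ℂ :=
  (ψ (superdiag F (u : Matrix (Fin n) (Fin n) F)) : ℂˣ)

/-- `lam` is a `χ`-Whittaker functional for `π`. -/
def IsWhittaker {n : ℕ} {V : Type*} [AddCommGroup V] [Module ℂ V]
    (π : Representation ℂ (GL (Fin n) F) V) (χ : GL (Fin n) F → ℂ)
    (lam : V →ₗ[ℂ] ℂ) : Prop :=
  ∀ u : GL (Fin n) F, IsUnip F (u : Matrix (Fin n) (Fin n) F) →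
    ∀ v : V, lam (π u v) = χ u * lam v

/-- `π` is irreducible: the only invariant subspaces are `⊥` and `⊤`. -/
def IsIrreducible {n : ℕ} {V : Type*} [AddCommGroup V] [Module ℂ V]
    (π : Representation ℂ (GL (Fin n) F) V) : Prop :=
  ∀ W : Submodule ℂ V, (∀ g v, v ∈ W → π g v ∈ W) → W = ⊥ ∨ W = ⊤

/-- The normalized Bessel function
`J_{π,θ}(g) = |U_n(F)|⁻¹ ∑_{u ∈ U_n(F)} χ_π(gu) θ(u)⁻¹`. -/
noncomputable def Bessel {n : ℕ} {V : Type*} [AddCommGroup V] [Module ℂ V]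
    (π : Representation ℂ (GL (Fin n) F) V) (θ : GL (Fin n) F → ℂ)
    (g : GL (Fin n) F) : ℂ :=
  ((UnipFinset F n).card : ℂ)⁻¹ *
    ∑ u ∈ UnipFinset F n, LinearMap.trace ℂ V (π (g * u)) * (θ u)⁻¹

/-!
The element `e = |U|⁻¹ ∑ u, ψ_n(u)⁻¹ u` of the group algebra is idempotent, and Gelfand's trick
shows that the corner `e k[GL_n(F)] e` is commutative: the reflection in the antidiagonal is an
anti-automorphism fixing `e`, and it fixes every monomial matrix that is admissible for `ψ_n`, while
by the Bruhat decomposition the corner is spanned by the elements `e m e` with `m` monomial and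
admissible. On an irreducible representation `π` the group algebra acts by all endomorphisms, so the
commutativity forces `e` to act with rank at most one, and the genericity of `π` makes its image
nonzero. Hence `e` acts as `v ↦ f(v) w` with `f(w) = 1`; here `f` is a Whittaker functional, and the
trace formula `J(g) = tr(π(g) e) = f(π(g) w)` yields all three properties.
-/

open MulOpposite
open scoped MonoidAlgebra

section GelfandTrick

theorem commute_mul_mul_of_map_eq_op {A : Type*} [Semigroup A] (T : A →ₙ* Aᵐᵒᵖ) (e : A)
    (hT : ∀ a, T (e * a * e) = op (e * a * e)) (a b : A) :
    Commute (e * a * e) (e * b * e) := by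
  have hfix : T (e * a * e * (e * b * e)) = op (e * a * e * (e * b * e)) := by
    simpa only [mul_assoc] using hT (a * e * (e * b))
  rw [map_mul, hT, hT] at hfix
  exact op_injective hfix.symm

/-- The anti-endomorphism of the group algebra induced by an anti-endomorphism `τ` of the group. -/
noncomputable def antiMap (k : Type*) {G : Type*} [CommSemiring k] [Monoid G] (τ : G →* Gᵐᵒᵖ) :
    k[G] →ₐ[k] k[G]ᵐᵒᵖ :=
  MonoidAlgebra.lift k _ G ((MonoidHom.op (MonoidAlgebra.of k G)).comp τ)

theorem antiMap_of {k G : Type*} [CommSemiring k] [Monoid G] (τ : G →* Gᵐᵒᵖ) (g : G) :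
    antiMap k τ (MonoidAlgebra.of k G g) = op (MonoidAlgebra.of k G (unop (τ g))) :=
  MonoidAlgebra.lift_of _ _

variable {k G : Type*} [Field k] [Group G] {U : Subgroup G} [Fintype U] (θ : U →* kˣ)

/-- The element `|U|⁻¹ ∑ u ∈ U, θ(u)⁻¹ u` of the group algebra. If `|U|` is nonzero in `k`, it acts
on every representation as a projection onto the vectors on which `U` acts through `θ`. -/
noncomputable def charIdempotent : k[G] :=
  (Fintype.card U : k)⁻¹ • ∑ u : U, (θ u)⁻¹ • MonoidAlgebra.of k G u

theorem of_mul_charIdempotent (u : U) :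
    MonoidAlgebra.of k G u * charIdempotent θ = θ u • charIdempotent θ := by
  rw [charIdempotent, mul_smul_comm, smul_comm]
  congr 1
  rw [Finset.mul_sum, Finset.smul_sum,
    ← (Group.mulLeft_bijective u).sum_comp fun x : U ↦ θ u • (θ x)⁻¹ • MonoidAlgebra.of k G x]
  refine Finset.sum_congr rfl fun x _ ↦ ?_
  rw [mul_smul_comm, smul_smul, map_mul θ, mul_inv, mul_inv_cancel_left, Subgroup.coe_mul, map_mul]

theorem charIdempotent_mul_of (u : U) :
    charIdempotent θ * MonoidAlgebra.of k G u = θ u • charIdempotent θ := by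
  rw [charIdempotent, smul_mul_assoc, smul_comm]
  congr 1
  rw [Finset.sum_mul, Finset.smul_sum,
    ← (Group.mulRight_bijective u).sum_comp fun x : U ↦ θ u • (θ x)⁻¹ • MonoidAlgebra.of k G x]
  refine Finset.sum_congr rfl fun x _ ↦ ?_
  rw [smul_mul_assoc, smul_smul, map_mul θ, mul_comm (θ x), mul_inv, mul_inv_cancel_left,
    Subgroup.coe_mul, map_mul]

theorem isIdempotentElem_charIdempotent [NeZero (Fintype.card U : k)] :
    IsIdempotentElem (charIdempotent θ) := by
  have hterm (u : U) :
      (θ u)⁻¹ • MonoidAlgebra.of k G u * charIdempotent θ = charIdempotent θ := by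
    rw [smul_mul_assoc, of_mul_charIdempotent, inv_smul_smul]
  calc charIdempotent θ * charIdempotent θ
      = (Fintype.card U : k)⁻¹ •
          ∑ u : U, (θ u)⁻¹ • MonoidAlgebra.of k G u * charIdempotent θ := by
        rw [← Finset.sum_mul, ← smul_mul_assoc, ← charIdempotent]
    _ = charIdempotent θ := by
        rw [Finset.sum_congr rfl fun u _ ↦ hterm u, Finset.sum_const, Finset.card_univ,
          ← Nat.cast_smul_eq_nsmul k, inv_smul_smul₀ (NeZero.ne _)]

theorem charIdempotent_mul_of_mul_mul (u v : U) (g : G) :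
    charIdempotent θ * MonoidAlgebra.of k G (u * g * v) * charIdempotent θ =
      (θ u * θ v) • (charIdempotent θ * MonoidAlgebra.of k G g * charIdempotent θ) := by
  simp only [map_mul, mul_assoc, of_mul_charIdempotent]
  simp only [← mul_assoc, charIdempotent_mul_of, mul_smul_comm, smul_mul_assoc, smul_smul, mul_comm]

/-- The element `m` is admissible for the character `θ` of `U` if `θ` takes the same value on the
two sides of every relation `u * m = m * v`; this is what allows the double coset `U m U` to carry
a function transforming by `θ` on both sides. -/
def IsAdmissible {M : Type*} [Monoid M] (θ : U →* M) (m : G) : Prop :=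
  ∀ u v : U, u * m = m * v → θ u = θ v

theorem charIdempotent_mul_of_mul_eq_zero {m : G} (hm : ¬ IsAdmissible θ m) :
    charIdempotent θ * MonoidAlgebra.of k G m * charIdempotent θ = 0 := by
  simp only [IsAdmissible, not_forall] at hm
  obtain ⟨u, v, huv, hne⟩ := hm
  have hleft := charIdempotent_mul_of_mul_mul θ u 1 m
  have hright := charIdempotent_mul_of_mul_mul θ 1 v m
  simp only [OneMemClass.coe_one, map_one, mul_one, one_mul] at hleft hright
  rw [huv, hright, Units.smul_def, Units.smul_def] at hleft
  by_contra h0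
  exact hne (Units.ext (smul_left_injective k h0 hleft)).symm

variable {θ} {τ : G ≃* Gᵐᵒᵖ}

theorem antiMap_charIdempotent (hτ : ∀ u : U, ∃ u' : U, τ u = op (u' : G) ∧ θ u' = θ u) :
    antiMap k (τ : G →* Gᵐᵒᵖ) (charIdempotent θ) = op (charIdempotent θ) := by
  choose σ hσ hθσ using hτ
  have hinj : Function.Injective σ := fun u v huv ↦
    Subtype.ext (τ.injective (by rw [hσ, hσ, huv]))
  have hterm (u : U) : antiMap k (τ : G →* Gᵐᵒᵖ) ((θ u)⁻¹ • MonoidAlgebra.of k G u) =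
      op ((θ (σ u))⁻¹ • MonoidAlgebra.of k G (σ u : G)) := by
    rw [Units.smul_def, map_smul, antiMap_of, hθσ, Units.smul_def, op_smul, MonoidHom.coe_coe, hσ,
      unop_op]
  calc antiMap k (τ : G →* Gᵐᵒᵖ) (charIdempotent θ)
      = (Fintype.card U : k)⁻¹ • ∑ u : U, op ((θ (σ u))⁻¹ • MonoidAlgebra.of k G (σ u : G)) := by
        rw [charIdempotent, map_smul, map_sum, Finset.sum_congr rfl fun u _ ↦ hterm u]
    _ = op (charIdempotent θ) := by
        rw [(Finite.injective_iff_bijective.mp hinj).sum_comp fun u : U ↦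
            op ((θ u)⁻¹ • MonoidAlgebra.of k G (u : G)),
          charIdempotent, op_smul, Finset.op_sum]

/-- **Gelfand's trick**. -/
theorem commute_charIdempotent_mul_mul
    (hτ : ∀ u : U, ∃ u' : U, τ u = op (u' : G) ∧ θ u' = θ u)
    (hfix : ∀ g : G, ∃ u v : U, IsAdmissible θ (u * g * v) → τ (u * g * v) = op (u * g * v : G))
    (a b : k[G]) :
    Commute (charIdempotent θ * a * charIdempotent θ)
      (charIdempotent θ * b * charIdempotent θ) := by
  set e := charIdempotent θ with he
  let T : k[G] →ₐ[k] k[G]ᵐᵒᵖ := antiMap k (τ : G →* Gᵐᵒᵖ)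
  have hTe : T e = op e := antiMap_charIdempotent hτ
  have hT_of (m : G) (hm : IsAdmissible θ m → τ m = op m) :
      T (e * MonoidAlgebra.of k G m * e) = op (e * MonoidAlgebra.of k G m * e) := by
    by_cases hadm : IsAdmissible θ m
    · rw [map_mul, map_mul, hTe, antiMap_of, MonoidHom.coe_coe, hm hadm, unop_op]
      simp only [op_mul, mul_assoc]
    · rw [charIdempotent_mul_of_mul_eq_zero θ hadm, map_zero, op_zero]
  refine commute_mul_mul_of_map_eq_op (T : k[G] →ₙ* k[G]ᵐᵒᵖ) e (fun a ↦ ?_) a b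
  change T (e * a * e) = op (e * a * e)
  induction a using MonoidAlgebra.induction_on with
  | of g =>
    obtain ⟨u, v, huv⟩ := hfix g
    have h := hT_of _ huv
    rw [he, charIdempotent_mul_of_mul_mul, Units.smul_def, map_smul, op_smul] at h
    exact smul_right_injective _ (Units.ne_zero _) h
  | add x y hx hy => rw [mul_add, add_mul, map_add, hx, hy, op_add]
  | smul r x hx => rw [mul_smul_comm, smul_mul_assoc, map_smul, hx, op_smul]

end GelfandTrick

section RankOne

open Module

/-- **Burnside's theorem**. -/
theorem asAlgebraHom_surjective {k G V : Type*} [Field k] [IsAlgClosed k] [Monoid G]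
    [AddCommGroup V] [Module k V] [FiniteDimensional k V] (π : Representation k G V)
    [π.IsIrreducible] : Function.Surjective π.asAlgebraHom := by
  intro f
  let f' : End (End k[G] π.asModule) π.asModule :=
    { f with
      map_smul' := fun φ v ↦ by
        obtain ⟨c, rfl⟩ :=
          (IsSimpleModule.algebraMap_end_bijective_of_isAlgClosed (A := k[G]) k).2 φ
        exact f.map_smul c v }
  obtain ⟨s, hs⟩ := Module.Finite.fg_top (R := k) (M := V)
  obtain ⟨a, ha⟩ := jacobson_density f' s
  exact ⟨a, LinearMap.ext_on hs fun v hv ↦ (ha v hv).symm⟩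

theorem exists_eq_smulRight_of_commute {k V : Type*} [Field k] [AddCommGroup V] [Module k V]
    {ε : End k V} (hε : IsIdempotentElem ε) (hε0 : ε ≠ 0)
    (hcomm : ∀ a b : End k V, Commute (ε * a * ε) (ε * b * ε)) :
    ∃ (f : Dual k V) (w : V), f w = 1 ∧ ε = f.smulRight w := by
  obtain ⟨x, hx⟩ := DFunLike.ne_iff.mp hε0
  obtain ⟨f₀, hf₀⟩ := Projective.exists_dual_ne_zero k hx
  set w : V := (f₀ (ε x))⁻¹ • ε x with hw
  have hεε (v : V) : ε (ε v) = ε v := congr($hε v)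
  have hεw : ε w = w := by rw [hw, map_smul, hεε]
  have hf₀w : f₀ w = 1 := by rw [hw, map_smul, smul_eq_mul, inv_mul_cancel₀ hf₀]
  refine ⟨f₀ ∘ₗ ε, w, by rw [LinearMap.comp_apply, hεw, hf₀w], LinearMap.ext fun v ↦ ?_⟩
  -- For `a` and `b` of rank one, commutation says that `ε v` is a multiple of `w`.
  have h := congr($(hcomm (f₀.smulRight v) (f₀.smulRight w)) w)
  simpa [hεw, hf₀w, hεε] using h

end RankOne

section Bessel

open Module

variable {k G V : Type*} [Field k] [Group G] [AddCommGroup V] [Module k V] {U : Subgroup G}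

/-- A linear functional `l` on a representation `π` of `G` is a Whittaker functional for a character
`θ` of a subgroup `U` if it transforms under `U` by `θ`. -/
def IsWhittakerFunctional (π : Representation k G V) (θ : U →* kˣ) (l : Dual k V) : Prop :=
  ∀ (u : U) (v : V), l (π u v) = θ u * l v

variable [Fintype U]

/-- The Bessel function `g ↦ |U|⁻¹ ∑ u ∈ U, χ_π(g u) θ(u)⁻¹` of a representation `π` of `G` with
respect to a character `θ` of a subgroup `U`. -/
noncomputable def besselFunction (π : Representation k G V) (θ : U →* kˣ) (g : G) : k :=
  (Fintype.card U : k)⁻¹ * ∑ u : U, π.character (g * u) * (θ u : k)⁻¹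

variable (π : Representation k G V) {θ : U →* kˣ}

theorem asAlgebraHom_charIdempotent_mul (u : U) :
    π.asAlgebraHom (charIdempotent θ) * π u = (θ u : k) • π.asAlgebraHom (charIdempotent θ) := by
  rw [← π.asAlgebraHom_of, ← map_mul, charIdempotent_mul_of, Units.smul_def, map_smul]

theorem mul_asAlgebraHom_charIdempotent (u : U) :
    π u * π.asAlgebraHom (charIdempotent θ) = (θ u : k) • π.asAlgebraHom (charIdempotent θ) := by
  rw [← π.asAlgebraHom_of, ← map_mul, of_mul_charIdempotent, Units.smul_def, map_smul]

variable (θ) in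
theorem besselFunction_eq_trace (g : G) :
    besselFunction π θ g =
      LinearMap.trace k V (π g * π.asAlgebraHom (charIdempotent θ)) := by
  simp only [besselFunction, charIdempotent, map_smul, map_sum, Units.smul_def, mul_smul_comm,
    Finset.mul_sum, Representation.asAlgebraHom_of, ← map_mul, Representation.character,
    smul_eq_mul, Units.val_inv_eq_inv_val, mul_comm]

theorem besselFunction_mul_mul (u v : U) (g : G) :
    besselFunction π θ (u * g * v) = θ u * θ v * besselFunction π θ g := by
  simp only [besselFunction_eq_trace, map_mul]
  rw [mul_assoc, mul_asAlgebraHom_charIdempotent, mul_smul_comm, map_smul, mul_assoc,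
    LinearMap.trace_mul_comm, mul_assoc, asAlgebraHom_charIdempotent_mul, mul_smul_comm, map_smul,
    smul_eq_mul, smul_eq_mul]
  ring

variable {π}

theorem IsWhittakerFunctional.apply_asAlgebraHom_charIdempotent [NeZero (Fintype.card U : k)]
    {l : Dual k V} (hl : IsWhittakerFunctional π θ l) (v : V) :
    l (π.asAlgebraHom (charIdempotent θ) v) = l v := by
  have hterm (u : U) : (↑(θ u)⁻¹ : k) • l (π u v) = l v := by
    rw [hl, smul_eq_mul, Units.inv_mul_cancel_left]
  simp only [charIdempotent, map_smul, map_sum, LinearMap.smul_apply, LinearMap.sum_apply,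
    Units.smul_def, Representation.asAlgebraHom_of, hterm]
  rw [Finset.sum_const, Finset.card_univ, ← Nat.cast_smul_eq_nsmul k,
    inv_smul_smul₀ (NeZero.ne _)]

theorem isWhittakerFunctional_of_eq_smulRight {f : Dual k V} {w : V} (hfw : f w = 1)
    (hε : π.asAlgebraHom (charIdempotent θ) = f.smulRight w) : IsWhittakerFunctional π θ f := by
  intro u v
  have h := congr(f ($(asAlgebraHom_charIdempotent_mul π (θ := θ) u) v))
  simpa [hε, hfw] using h

theorem besselFunction_eq_of_eq_smulRight [FiniteDimensional k V] {f : Dual k V} {w : V}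
    (hε : π.asAlgebraHom (charIdempotent θ) = f.smulRight w) (g : G) :
    besselFunction π θ g = f (π g w) := by
  have hcomp : π g * f.smulRight w = f.smulRight (π g w) := by ext; simp
  rw [besselFunction_eq_trace, hε, hcomp, LinearMap.trace_smulRight]

theorem exists_asAlgebraHom_charIdempotent_eq_smulRight [IsAlgClosed k] [FiniteDimensional k V]
    [NeZero (Fintype.card U : k)] [π.IsIrreducible]
    (hcomm : ∀ a b : k[G], Commute (charIdempotent θ * a * charIdempotent θ)
      (charIdempotent θ * b * charIdempotent θ))
    (hgen : ∃ l : Dual k V, l ≠ 0 ∧ IsWhittakerFunctional π θ l) :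
    ∃ (f : Dual k V) (w : V), f w = 1 ∧ π.asAlgebraHom (charIdempotent θ) = f.smulRight w := by
  obtain ⟨l, hl0, hl⟩ := hgen
  refine exists_eq_smulRight_of_commute ((isIdempotentElem_charIdempotent θ).map π.asAlgebraHom)
    (fun hε ↦ hl0 (LinearMap.ext fun v ↦ ?_)) fun a b ↦ ?_
  · rw [← hl.apply_asAlgebraHom_charIdempotent, hε, LinearMap.zero_apply, map_zero,
      LinearMap.zero_apply]
  · obtain ⟨a, rfl⟩ := asAlgebraHom_surjective π a
    obtain ⟨b, rfl⟩ := asAlgebraHom_surjective π b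
    simpa only [map_mul] using (hcomm a b).map π.asAlgebraHom

end Bessel

section Unipotent

theorem mul_apply_self_of_isUpperTriangular {m R : Type*} [Fintype m] [LinearOrder m]
    [NonUnitalNonAssocSemiring R] {A B : Matrix m m R} (hA : A.IsUpperTriangular)
    (hB : B.IsUpperTriangular) (i : m) : (A * B) i i = A i i * B i i := by
  rw [mul_apply]
  refine Fintype.sum_eq_single i fun j hji ↦ ?_
  obtain hlt | hlt := hji.lt_or_gt
  · rw [hA hlt, zero_mul]
  · rw [hB hlt, mul_zero]

variable {K : Type*} [Field K] {n : ℕ}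

theorem isUnip_iff {u : Matrix (Fin n) (Fin n) K} :
    IsUnip K u ↔ u.IsUpperTriangular ∧ ∀ i, u i i = 1 :=
  and_comm

theorem isUnip_one_add {N : Matrix (Fin n) (Fin n) K} (hN : ∀ i j, j ≤ i → N i j = 0) :
    IsUnip K (1 + N) := by
  refine ⟨fun i ↦ ?_, fun i j hji ↦ ?_⟩
  · rw [Matrix.add_apply, one_apply_eq, hN i i le_rfl, add_zero]
  · rw [Matrix.add_apply, one_apply_ne (Fin.ne_of_gt hji), hN i j hji.le, add_zero]

theorem isUnip_one : IsUnip K (1 : Matrix (Fin n) (Fin n) K) :=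
  add_zero (1 : Matrix (Fin n) (Fin n) K) ▸ isUnip_one_add fun _ _ _ ↦ rfl

theorem IsUnip.mul {u v : Matrix (Fin n) (Fin n) K} (hu : IsUnip K u) (hv : IsUnip K v) :
    IsUnip K (u * v) := by
  rw [isUnip_iff] at *
  exact ⟨hu.1.mul hv.1, fun i ↦ by
    rw [mul_apply_self_of_isUpperTriangular hu.1 hv.1, hu.2, hv.2, one_mul]⟩

theorem IsUnip.det_eq_one {u : Matrix (Fin n) (Fin n) K} (hu : IsUnip K u) : u.det = 1 := by
  rw [isUnip_iff] at hu
  rw [det_of_isUpperTriangular hu.1, Finset.prod_eq_one fun i _ ↦ hu.2 i]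

theorem IsUnip.inv {u : Matrix (Fin n) (Fin n) K} (hu : IsUnip K u) : IsUnip K u⁻¹ := by
  have hdet : IsUnit u.det := hu.det_eq_one ▸ isUnit_one
  let _ := u.invertibleOfIsUnitDet hdet
  rw [isUnip_iff] at *
  have hinv : u⁻¹.IsUpperTriangular := blockTriangular_inv_of_blockTriangular hu.1
  refine ⟨hinv, fun i ↦ ?_⟩
  have h := mul_apply_self_of_isUpperTriangular hinv hu.1 i
  rwa [nonsing_inv_mul u hdet, one_apply_eq, hu.2, mul_one, eq_comm] at h

theorem IsUnip.mul_apply_superdiag {u v : Matrix (Fin n) (Fin n) K} (hu : IsUnip K u)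
    (hv : IsUnip K v) {i j : Fin n} (hij : (j : ℕ) = i + 1) : (u * v) i j = u i j + v i j := by
  have hne : i ≠ j := fun h ↦ by simp [h] at hij
  rw [mul_apply, Fintype.sum_eq_add i j hne fun l hl ↦ ?_, hu.1, hv.1, one_mul, mul_one, add_comm]
  obtain hli | hjl : (l : ℕ) < i ∨ (j : ℕ) < l := by grind
  · rw [hu.2 i l hli, zero_mul]
  · rw [hv.2 l j hjl, mul_zero]

theorem superdiag_mul {u v : Matrix (Fin n) (Fin n) K} (hu : IsUnip K u) (hv : IsUnip K v) :
    superdiag K (u * v) = superdiag K u + superdiag K v := by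
  simp only [superdiag, ← Finset.sum_add_distrib]
  refine Finset.sum_congr rfl fun i _ ↦ Finset.sum_congr rfl fun j _ ↦ ?_
  split_ifs with hij
  · exact hu.mul_apply_superdiag hv hij
  · exact (add_zero 0).symm

theorem superdiag_one : superdiag K (1 : Matrix (Fin n) (Fin n) K) = 0 := by
  simpa using superdiag_mul (K := K) (n := n) isUnip_one isUnip_one

theorem superdiag_transvection (i j : Fin n) (c : K) :
    superdiag K (transvection i j c) = if (j : ℕ) = i + 1 then c else 0 := by
  have hterm (i' j' : Fin n) : (if (j' : ℕ) = i' + 1 then transvection i j c i' j' else 0) =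
      if i = i' then if j = j' then if (j : ℕ) = i + 1 then c else 0 else 0 else 0 := by
    simp only [transvection, Matrix.add_apply, one_apply, single_apply]
    grind
  simp only [superdiag, hterm, Finset.sum_ite_irrel, Finset.sum_const_zero, Finset.sum_ite_eq,
    Finset.mem_univ, if_true]

variable (K n) in
/-- The group `U_n(K)` of upper triangular unipotent matrices, as a subgroup of `GL_n(K)`. -/
def unipotentSubgroup : Subgroup (GL (Fin n) K) where
  carrier := {u | IsUnip K u.val}
  one_mem' := isUnip_one
  mul_mem' hu hv := hu.mul hv
  inv_mem' {u} hu := by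
    change IsUnip K u⁻¹.val
    exact coe_units_inv u ▸ IsUnip.inv hu

noncomputable instance [Finite K] : Fintype (unipotentSubgroup K n) := Fintype.ofFinite _

theorem IsUnip.exists_coe_eq {A : Matrix (Fin n) (Fin n) K} (hA : IsUnip K A) :
    ∃ u : unipotentSubgroup K n, u.1.val = A :=
  ⟨⟨.mkOfDetNeZero A (hA.det_eq_one ▸ one_ne_zero), hA⟩, rfl⟩

/-- The character `u ↦ ψ(u₁₂ + u₂₃ + ⋯ + uₙ₋₁,ₙ)` of `U_n(K)`. -/
def unipotentChar {M : Type*} [Monoid M] (ψ : AddChar K M) : unipotentSubgroup K n →* M where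
  toFun u := ψ (superdiag K u.1.val)
  map_one' := (congrArg ψ superdiag_one).trans ψ.map_zero_eq_one
  map_mul' u v := (congrArg ψ (superdiag_mul u.2 v.2)).trans (ψ.map_add_eq_mul _ _)

end Unipotent

section AntiTranspose

/-- Reflection in the antidiagonal, as an anti-automorphism of `GL_n(R)`. -/
def antiTranspose {R : Type*} [CommRing R] {n : ℕ} : GL (Fin n) R ≃* (GL (Fin n) R)ᵐᵒᵖ :=
  (Units.mapEquiv ((reindexAlgEquiv R R Fin.revPerm).trans
    (transposeAlgEquiv (Fin n) R R)).toMulEquiv).trans Units.opEquiv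

theorem unop_antiTranspose_apply {R : Type*} [CommRing R] {n : ℕ} (g : GL (Fin n) R)
    (i j : Fin n) :
    (unop (antiTranspose g)).val i j = g.val j.rev i.rev :=
  rfl

variable {K : Type*} [Field K] {n : ℕ}

theorem isUnip_unop_antiTranspose {u : GL (Fin n) K} (hu : IsUnip K u.val) :
    IsUnip K (unop (antiTranspose u)).val :=
  ⟨fun i ↦ hu.1 i.rev, fun i j hij ↦ hu.2 j.rev i.rev (by grind)⟩

theorem superdiag_unop_antiTranspose (g : GL (Fin n) K) :
    superdiag K (unop (antiTranspose g)).val = superdiag K g.val := by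
  simp only [superdiag, unop_antiTranspose_apply]
  rw [Finset.sum_comm, ← Equiv.sum_comp Fin.revPerm]
  refine Finset.sum_congr rfl fun i _ ↦ ?_
  rw [← Equiv.sum_comp Fin.revPerm]
  refine Finset.sum_congr rfl fun j _ ↦ ?_
  simp only [Fin.revPerm_apply, Fin.rev_rev]
  grind

theorem exists_antiTranspose_eq_and_unipotentChar_eq {M : Type*} [Monoid M] (ψ : AddChar K M)
    (u : unipotentSubgroup K n) :
    ∃ u' : unipotentSubgroup K n, antiTranspose (u : GL (Fin n) K) = op (u' : GL (Fin n) K) ∧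
      unipotentChar ψ u' = unipotentChar ψ u :=
  ⟨⟨unop (antiTranspose u.1), isUnip_unop_antiTranspose u.2⟩, rfl,
    congrArg ψ (superdiag_unop_antiTranspose u.1)⟩

end AntiTranspose

section Bruhat

variable {m l K : Type*} [Field K] {n : ℕ}

/-- The position `(i, j)` is a pivot of `A` if it carries the only nonzero entry of its row and the
only nonzero entry of its column. -/
def IsPivot {R : Type*} [Zero R] (A : Matrix m l R) (i : m) (j : l) : Prop :=
  A i j ≠ 0 ∧ (∀ i' ≠ i, A i' j = 0) ∧ ∀ j' ≠ j, A i j' = 0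

/-- The result of clearing the column and the row of the entry `(p, q)` of `A` by row operations
followed by column operations. -/
def pivotClear [DecidableEq m] [DecidableEq l] (A : Matrix m l K) (p : m) (q : l) :
    Matrix m l K :=
  of fun a b ↦ if a = p then (if b = q then A p q else 0) else A a b - A a q / A p q * A p b

theorem isPivot_pivotClear_self [DecidableEq m] [DecidableEq l] {A : Matrix m l K} {p : m} {q : l}
    (hpq : A p q ≠ 0) : IsPivot (pivotClear A p q) p q := by
  refine ⟨?_, fun a ha ↦ ?_, fun b hb ↦ ?_⟩
  · simpa [pivotClear] using hpq
  · simp [pivotClear, ha, hpq]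
  · simp [pivotClear, hb]

theorem IsPivot.pivotClear [DecidableEq m] [DecidableEq l] {A : Matrix m l K} {p i : m} {q j : l}
    (h : IsPivot A i j) (hpq : A p q ≠ 0) (hjq : j ≠ q) : IsPivot (pivotClear A p q) i j := by
  obtain ⟨hij, hcol, hrow⟩ := h
  have hiq : A i q = 0 := hrow q hjq.symm
  have hip : i ≠ p := by rintro rfl; exact hpq hiq
  have hpj : A p j = 0 := hcol p hip.symm
  refine ⟨?_, fun a ha ↦ ?_, fun b hb ↦ ?_⟩
  · simpa [Stmt1.pivotClear, hip, hiq] using hij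
  · simp [Stmt1.pivotClear, hjq, hpj, hcol a ha]
  · simp [Stmt1.pivotClear, hip, hiq, hrow b hb]

theorem exists_isUnip_mul_mul_eq_pivotClear {A : Matrix (Fin n) (Fin n) K} {p q : Fin n}
    (hpq : A p q ≠ 0) (hbelow : ∀ a, p < a → A a q = 0) (hleft : ∀ b < q, A p b = 0) :
    ∃ u v : Matrix (Fin n) (Fin n) K, IsUnip K u ∧ IsUnip K v ∧ u * A * v = pivotClear A p q := by
  let c (a : Fin n) : K := if a = p then 0 else -(A a q / A p q)
  let r (b : Fin n) : K := if b = q then 0 else -(A p b / A p q)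
  refine ⟨1 + vecMulVec c (Pi.single p 1), 1 + vecMulVec (Pi.single q 1) r,
    isUnip_one_add fun a b hba ↦ ?_, isUnip_one_add fun a b hba ↦ ?_, ?_⟩
  · grind [vecMulVec_apply]
  · grind [vecMulVec_apply]
  · ext a b
    simp only [add_mul, one_mul, mul_add, mul_one, vecMulVec_mul, mul_vecMulVec, Matrix.add_apply,
      vecMulVec_apply, single_one_vecMul, mulVec_single_one, row_apply, col_apply,
      Stmt1.pivotClear, of_apply, c, r]
    grind

theorem exists_isPivot_of_lt {A : Matrix (Fin n) (Fin n) K} (hA : A.det ≠ 0) (k : ℕ) :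
    ∃ u v : Matrix (Fin n) (Fin n) K, IsUnip K u ∧ IsUnip K v ∧
      ∀ j : Fin n, (j : ℕ) < k → ∃ i, IsPivot (u * A * v) i j := by
  induction k with
  | zero => exact ⟨1, 1, isUnip_one, isUnip_one, fun j hj ↦ absurd hj (Nat.not_lt_zero j)⟩
  | succ k ih =>
    obtain ⟨u, v, hu, hv, hpiv⟩ := ih
    obtain hnk | hkn := le_or_gt n k
    · exact ⟨u, v, hu, hv, fun j _ ↦ hpiv j (j.isLt.trans_le hnk)⟩
    set B := u * A * v with hB
    let q : Fin n := ⟨k, hkn⟩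
    have hBdet : B.det ≠ 0 := by
      rwa [hB, det_mul, det_mul, hu.det_eq_one, hv.det_eq_one, one_mul, mul_one]
    have hcol : ∃ p, B p q ≠ 0 := by
      by_contra! h
      exact hBdet (det_eq_zero_of_column_eq_zero q h)
    obtain ⟨p, hp, hpmax⟩ := (Set.toFinite {p | B p q ≠ 0}).exists_maximal hcol
    have hbelow (a : Fin n) (ha : p < a) : B a q = 0 :=
      by_contra fun h ↦ (hpmax h ha.le).not_gt ha
    have hleft (b : Fin n) (hb : b < q) : B p b = 0 := by
      obtain ⟨i, -, hicol, hirow⟩ := hpiv b hb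
      exact hicol p fun hpi ↦ hp (hpi ▸ hirow q hb.ne')
    obtain ⟨u', v', hu', hv', heq⟩ := exists_isUnip_mul_mul_eq_pivotClear hp hbelow hleft
    have hassoc : u' * u * A * (v * v') = pivotClear B p q := by
      rw [← heq, hB]
      simp only [Matrix.mul_assoc]
    refine ⟨u' * u, v * v', hu'.mul hu, hv.mul hv', fun j hj ↦ ?_⟩
    rw [hassoc]
    obtain hjk | hjk := Nat.lt_succ_iff_lt_or_eq.mp hj
    · obtain ⟨i, hi⟩ := hpiv j hjk
      exact ⟨i, hi.pivotClear hp (Fin.ne_of_lt hjk)⟩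
    · obtain rfl : j = q := Fin.ext hjk
      exact ⟨p, isPivot_pivotClear_self hp⟩

theorem exists_perm_isPivot [Finite m] {R : Type*} [Zero R] {A : Matrix m m R}
    (h : ∀ j, ∃ i, IsPivot A i j) : ∃ σ : Equiv.Perm m, ∀ j, IsPivot A (σ j) j := by
  choose f hf using h
  have hinj : Function.Injective f := fun j j' hjj' ↦ by
    by_contra hne
    exact (hf j').1 (hjj' ▸ (hf j).2.2 j' (Ne.symm hne))
  exact ⟨Equiv.ofBijective f (Finite.injective_iff_bijective.mp hinj), hf⟩

/-- The **Bruhat decomposition**, with torus and Weyl group parts merged into a monomial matrix. -/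
theorem exists_mul_mul_isPivot (g : GL (Fin n) K) :
    ∃ (u v : unipotentSubgroup K n) (σ : Equiv.Perm (Fin n)),
      ∀ j, IsPivot (u * g * v : GL (Fin n) K).val (σ j) j := by
  obtain ⟨u, v, hu, hv, hpiv⟩ := exists_isPivot_of_lt (GeneralLinearGroup.det_ne_zero g) n
  obtain ⟨u, rfl⟩ := hu.exists_coe_eq
  obtain ⟨v, rfl⟩ := hv.exists_coe_eq
  exact ⟨u, v, exists_perm_isPivot fun j ↦ hpiv j j.isLt⟩

end Bruhat

section Involution

variable {n : ℕ} {α : Type*}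

/-- The condition that a permutation `r` can only descend by steps of one, along which the labels
`d` are constant. -/
def HasUnitDescents (r : Equiv.Perm (Fin n)) (d : Fin n → α) : Prop :=
  ∀ i j : Fin n, (j : ℕ) = i + 1 → r j < r i → (r i : ℕ) = r j + 1 ∧ d j = d i

variable {r : Equiv.Perm (Fin n)} {d : Fin n → α}

theorem HasUnitDescents.lt_of_le (h : HasUnitDescents r d) {i j l : Fin n} (hij : i < j)
    (hr : r i < r j) (hjl : j ≤ l) : r i < r l := by
  obtain ⟨l, hl⟩ := l
  replace hjl : (j : ℕ) ≤ l := hjl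
  induction l, hjl using Nat.le_induction with
  | base => exact hr
  | succ l hjl ih =>
    have hil := ih (by lia)
    by_contra! hle
    have hne : r i ≠ r ⟨l + 1, hl⟩ := r.injective.ne (by grind)
    have := (h ⟨l, by lia⟩ ⟨l + 1, hl⟩ rfl (hle.trans_lt hil)).1
    grind

theorem HasUnitDescents.add_eq_of_lt (h : HasUnitDescents r d) {i l : Fin n} (hil : i < l)
    (hr : r l < r i) : (r l + l : ℕ) = r i + i ∧ d l = d i := by
  generalize hm : (l : ℕ) - i = m
  induction m generalizing i with
  | zero => grind
  | succ m ih =>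
    let j : Fin n := ⟨i + 1, by grind⟩
    have hij : i < j := Nat.lt_succ_self _
    have hjl : j ≤ l := Nat.succ_le_of_lt hil
    have hdesc : r j < r i := by
      refine (r.injective.ne hij.ne').lt_of_le (le_of_not_gt fun hlt ↦ ?_)
      exact (h.lt_of_le hij hlt hjl).not_gt hr
    obtain ⟨hstep, hd⟩ := h i j rfl hdesc
    obtain heq | hjl := hjl.eq_or_lt
    · exact ⟨by grind, heq ▸ hd⟩
    · have hrl : r l < r j := by
        refine (r.injective.ne hjl.ne').lt_of_le ?_
        grind
      have hrec := ih hjl hrl (by grind)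
      exact ⟨by grind, hrec.2.trans hd⟩

theorem HasUnitDescents.apply_apply_lt (h : HasUnitDescents r d) {i : Fin n} (hi : i < r i) :
    r (r i) < r i := by
  refine (r.injective.ne hi.ne').lt_of_le (le_of_not_gt fun hlt ↦ ?_)
  -- Otherwise `r` would map the interval `[r i, n)` into the smaller interval `(r i, n)`.
  have hmaps : Set.MapsTo r (Finset.Ici (r i)) (Finset.Ioi (r i)) := fun l hl ↦
    Finset.mem_coe.mpr (Finset.mem_Ioi.mpr (h.lt_of_le hi hlt (Finset.mem_Ici.mp hl)))
  have hcard := Finset.card_le_card_of_injOn r hmaps r.injective.injOn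
  rw [Fin.card_Ici, Fin.card_Ioi] at hcard
  grind

theorem HasUnitDescents.apply_apply (h : HasUnitDescents r d) (i : Fin n) :
    r (r i) = i ∧ d (r i) = d i := by
  induction i using WellFoundedLT.induction with
  | ind i ih =>
    obtain hlt | heq | hgt := lt_trichotomy (r i) i
    · obtain ⟨hr, hd⟩ := ih (r i) hlt
      have hri : r (r i) = i := r.injective hr
      exact ⟨hri, by rw [← hd, hri]⟩
    · rw [heq]
      exact ⟨heq, rfl⟩
    · obtain ⟨hr, hd⟩ := h.add_eq_of_lt hgt (h.apply_apply_lt hgt)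
      exact ⟨Fin.ext (by lia), hd⟩

end Involution

section AdmissibleMonomial

variable {K M : Type*} [Field K] [CommGroup M] {n : ℕ} {ψ : AddChar K M}

theorem isUnip_transvection {i j : Fin n} (hij : i < j) (c : K) :
    IsUnip K (transvection i j c) :=
  isUnip_one_add fun a b hba ↦ by grind

theorem transvection_mul_eq_mul_transvection {m l R : Type*} [Fintype m] [Fintype l]
    [DecidableEq m] [DecidableEq l] [CommRing R] {A : Matrix m l R} {i i' : m} {j j' : l}
    (hij : IsPivot A i j) (hij' : IsPivot A i' j') {b c : R} (hbc : c * A i' j' = A i j * b) :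
    transvection i i' c * A = A * transvection j j' b := by
  have hleft : single i i' c * A = single i j' (c * A i' j') := by
    ext a d
    obtain rfl | ha := eq_or_ne a i
    · rw [single_mul_apply_same]
      grind [hij'.2.2 d]
    · rw [single_mul_apply_of_ne _ _ _ _ _ ha, single_apply_of_row_ne ha.symm]
  have hright : A * single j j' b = single i j' (A i j * b) := by
    ext a d
    obtain rfl | hd := eq_or_ne d j'
    · rw [mul_single_apply_same]
      grind [hij.2.1 a]
    · rw [mul_single_apply_of_ne _ _ _ _ _ hd, single_apply_of_col_ne _ _ hd.symm]
  rw [transvection, transvection, Matrix.add_mul, Matrix.mul_add, Matrix.one_mul, Matrix.mul_one,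
    hleft, hright, hbc]

theorem IsAdmissible.row_eq_succ_and_apply_eq (hψ : ψ ≠ 1) {g : GL (Fin n) K}
    (hg : IsAdmissible (unipotentChar ψ) g)
    {i i' j j' : Fin n} (hij : IsPivot g.val i j) (hij' : IsPivot g.val i' j') (hi : i < i')
    (hj : (j' : ℕ) = j + 1) : (i' : ℕ) = i + 1 ∧ g.val i' j' = g.val i j := by
  have hvalue (c : K) :
      ψ (if (i' : ℕ) = i + 1 then c else 0) = ψ (c * g.val i' j' / g.val i j) := by
    have hjj' : j < j' := by grind
    obtain ⟨u, hu⟩ := (isUnip_transvection hi c).exists_coe_eq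
    obtain ⟨v, hv⟩ := (isUnip_transvection hjj' (c * g.val i' j' / g.val i j)).exists_coe_eq
    have hrel : (u : GL (Fin n) K) * g = g * v := Units.ext <| by
      rw [Units.val_mul, Units.val_mul, hu, hv]
      exact transvection_mul_eq_mul_transvection hij hij' (mul_div_cancel₀ _ hij.1).symm
    have h : ψ (superdiag K u.1.val) = ψ (superdiag K v.1.val) := hg u v hrel
    rwa [hu, hv, superdiag_transvection, superdiag_transvection, if_pos hj] at h
  have hcoeff : (if (i' : ℕ) = i + 1 then 1 else 0) - g.val i' j' / g.val i j = 0 := by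
    by_contra hne
    refine AddChar.IsPrimitive.of_ne_one hψ hne (DFunLike.ext _ _ fun c ↦ ?_)
    rw [AddChar.mulShift_apply, AddChar.one_apply, sub_mul, AddChar.map_sub_eq_div, div_eq_one]
    convert hvalue c using 2
    · rw [ite_mul, one_mul, zero_mul]
    · ring
  have hquot : g.val i' j' / g.val i j ≠ 0 := div_ne_zero hij'.1 hij.1
  split_ifs at hcoeff with hadj
  · exact ⟨hadj, ((div_eq_one_iff_eq hij.1).mp (sub_eq_zero.mp hcoeff).symm)⟩
  · exact absurd (sub_eq_zero.mp hcoeff).symm hquot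

theorem antiTranspose_eq_of_isAdmissible (hψ : ψ ≠ 1) {g : GL (Fin n) K} {σ : Equiv.Perm (Fin n)}
    (hσ : ∀ j, IsPivot g.val (σ j) j) (hg : IsAdmissible (unipotentChar ψ) g) :
    antiTranspose g = op g := by
  have hdesc : HasUnitDescents (σ.trans Fin.revPerm) fun j ↦ g.val (σ j) j := by
    intro i j hij hlt
    have h := hg.row_eq_succ_and_apply_eq hψ (hσ i) (hσ j) (by simpa using hlt) hij
    simp only [Equiv.trans_apply, Fin.revPerm_apply]
    exact ⟨by grind, h.2⟩
  refine unop_injective (Units.ext (Matrix.ext fun i j ↦ ?_))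
  rw [unop_antiTranspose_apply, unop_op]
  obtain ⟨hr, hd⟩ := hdesc.apply_apply j
  simp only [Equiv.trans_apply, Fin.revPerm_apply] at hr hd
  obtain rfl | hi := eq_or_ne i (σ j)
  · rwa [Fin.rev_eq_iff.mp hr] at hd
  · rw [(hσ j).2.1 i hi]
    refine (hσ i.rev).2.1 j.rev fun h ↦ hi ?_
    have := (hdesc.apply_apply i.rev).1
    simp only [Equiv.trans_apply, Fin.revPerm_apply, ← h, Fin.rev_rev] at this
    exact (Fin.rev_injective this).symm

end AdmissibleMonomial

section GeneralLinearGroup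

open Module

variable {K : Type*} [Field K] {n : ℕ}

theorem commute_charIdempotent_unipotentChar [Finite K] {k : Type*} [Field k] {ψ : AddChar K kˣ}
    (hψ : ψ ≠ 1) (a b : k[GL (Fin n) K]) :
    Commute (charIdempotent (unipotentChar ψ) * a * charIdempotent (unipotentChar ψ))
      (charIdempotent (unipotentChar ψ) * b * charIdempotent (unipotentChar ψ)) := by
  refine commute_charIdempotent_mul_mul (exists_antiTranspose_eq_and_unipotentChar_eq ψ)
    (fun g ↦ ?_) a b
  obtain ⟨u, v, σ, hσ⟩ := exists_mul_mul_isPivot g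
  exact ⟨u, v, antiTranspose_eq_of_isAdmissible hψ hσ⟩

theorem bessel_properties_general [Finite K] {k V : Type*} [Field k] [IsAlgClosed k]
    [NeZero (Fintype.card (unipotentSubgroup K n) : k)] {ψ : AddChar K kˣ} (hψ : ψ ≠ 1)
    [AddCommGroup V] [Module k V] [FiniteDimensional k V] (π : Representation k (GL (Fin n) K) V)
    [π.IsIrreducible]
    (hgen : ∃ l : Dual k V, l ≠ 0 ∧ IsWhittakerFunctional π (unipotentChar ψ) l) :
    (∀ (u₁ u₂ : unipotentSubgroup K n) (g : GL (Fin n) K),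
        besselFunction π (unipotentChar ψ) (u₁ * g * u₂) =
          unipotentChar ψ u₁ * unipotentChar ψ u₂ * besselFunction π (unipotentChar ψ) g) ∧
    besselFunction π (unipotentChar ψ) 1 = 1 ∧
    ∃ l : Dual k V, l ≠ 0 ∧ IsWhittakerFunctional π (unipotentChar ψ) l ∧
      ∃ v : V, ∀ g : GL (Fin n) K, besselFunction π (unipotentChar ψ) g = l (π g v) := by
  obtain ⟨f, w, hfw, hε⟩ := exists_asAlgebraHom_charIdempotent_eq_smulRight
    (commute_charIdempotent_unipotentChar hψ) hgen
  have hbessel (g : GL (Fin n) K) : besselFunction π (unipotentChar ψ) g = f (π g w) :=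
    besselFunction_eq_of_eq_smulRight hε g
  refine ⟨besselFunction_mul_mul π, ?_, f, ?_, isWhittakerFunctional_of_eq_smulRight hfw hε, w,
    hbessel⟩
  · rw [hbessel, map_one, End.one_apply, hfw]
  · rintro rfl
    exact zero_ne_one hfw

end GeneralLinearGroup

section Complex

open Module

variable {K V : Type*} [Field K] [AddCommGroup V] [Module ℂ V] {n : ℕ}
  {π : Representation ℂ (GL (Fin n) K) V} {ψ : AddChar K ℂˣ}

theorem IsIrreducible.isIrreducible [Nontrivial V] (h : IsIrreducible π) : π.IsIrreducible where
  exists_pair_ne := ⟨⊥, ⊤, fun heq ↦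
    bot_ne_top (α := Submodule ℂ V) congr(($heq).toSubmodule)⟩
  eq_bot_or_eq_top W :=
    (h W.toSubmodule fun g _ hv ↦ W.apply_mem_toSubmodule g hv).imp
      (fun hW ↦ Subrepresentation.toSubmodule_injective hW)
      fun hW ↦ Subrepresentation.toSubmodule_injective hW

theorem isWhittakerFunctional_unipotentChar_iff {l : Dual ℂ V} :
    IsWhittakerFunctional π (unipotentChar ψ) l ↔ IsWhittaker π (psiN ψ) l :=
  ⟨fun h u hu ↦ h ⟨u, hu⟩, fun h u ↦ h u u.2⟩

theorem besselFunction_unipotentChar [Fintype K] [DecidableEq K] (g : GL (Fin n) K) :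
    besselFunction π (unipotentChar ψ) g = Bessel π (psiN ψ) g := by
  have hmem (u : GL (Fin n) K) : u ∈ UnipFinset K n ↔ u ∈ unipotentSubgroup K n := by
    simp [UnipFinset, unipotentSubgroup]
  rw [besselFunction, Bessel, Fintype.card_of_subtype _ hmem, Finset.sum_subtype _ hmem]
  rfl

end Complex

theorem bessel_properties
    (ψ : AddChar F ℂˣ) (hψ : ∃ a : F, ψ a ≠ 1)
    (n : ℕ)
    {V : Type*} [AddCommGroup V] [Module ℂ V] [FiniteDimensional ℂ V] [Nontrivial V]
    (π : Representation ℂ (GL (Fin n) F) V)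
    (hπirr : IsIrreducible π)
    (hπgen : ∃ lam : V →ₗ[ℂ] ℂ, lam ≠ 0 ∧ IsWhittaker π (psiN ψ) lam) :
    (∀ u₁ u₂ g : GL (Fin n) F,
        IsUnip F (u₁ : Matrix (Fin n) (Fin n) F) →
        IsUnip F (u₂ : Matrix (Fin n) (Fin n) F) →
        Bessel π (psiN ψ) (u₁ * g * u₂) = psiN ψ u₁ * psiN ψ u₂ * Bessel π (psiN ψ) g) ∧
    Bessel π (psiN ψ) 1 = 1 ∧
    (∃ lam : V →ₗ[ℂ] ℂ, lam ≠ 0 ∧ IsWhittaker π (psiN ψ) lam ∧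
      ∃ v : V, ∀ g : GL (Fin n) F, Bessel π (psiN ψ) g = lam (π g v)) := by
  have := hπirr.isIrreducible
  have h := bessel_properties_general (AddChar.ne_one_iff.mpr hψ) π
    (by simpa only [isWhittakerFunctional_unipotentChar_iff] using hπgen)
  simp only [isWhittakerFunctional_unipotentChar_iff, besselFunction_unipotentChar] at h
  exact ⟨fun u₁ u₂ g hu₁ hu₂ ↦ h.1 ⟨u₁, hu₁⟩ ⟨u₂, hu₂⟩ g, h.2⟩

end Stmt1
end
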